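/- Let 0 < p < q < 2 and α > 1. If f is holomorphic and zero-free on the unit disk 𝔻 (f(z) ≠ 0 for all z ∈ 𝔻) with ∫_𝔻 |f(z)|^p dA_α(z) < ∞, then with r = √(p/q) one has (∫_𝔻 |f(rz)|^q dA_α(z))^{1/q} ≤ (∫_𝔻 |f(z)|^p dA_α(z))^{1/p}. -/

import Mathlib

open MeasureTheory Metric

/-- The weighted Bergman measure `dA_α` on the unit disk:
density `((α-1)/π)(1-|z|²)^(α-2)` with respect to Lebesgue area measure. -/
noncomputable def bergmanMeasure (α : ℝ) : Measure ℂ :=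
  (volume.restrict (ball (0 : ℂ) 1)).withDensity
    (fun z => ENNReal.ofReal ((α - 1) / Real.pi * (1 - ‖z‖ ^ 2) ^ (α - 2)))

/-!
Write `f = exp l`. For `l` holomorphic up to the boundary, put `Z(x) = ∫ |f(√(p / x) z)|ˣ dA_α`;
the claim is that `log Z(x) / x` decreases on `[p, q]`. Differentiating in `x`, this is exactly the
logarithmic Sobolev inequality `∫ |h|² log |h|² ≤ Re ∫ z h' conj h + ‖h‖² log ‖h‖²` for
`h = f(√(p / x) z)^(x / 2)`, where the power is available because `f` has no zeros.

The logarithmic Sobolev inequality passes to `h` from its Taylor polynomials, and for polynomials it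
follows by induction on the degree. Applied to `h(√s z)`, the difference of its two sides vanishes
at `s = 0`, and by a Hardy–Stein identity its `s`-derivative is an integral against `dA_(α+1)` of
terms in `|h'|²`, which is controlled by the inequality for `h'` in the space with parameter `α + 1`
together with Gibbs' inequality.

A general `f` is the limit of its dilations `f(ρ z)`, `ρ → 1`, and these have smaller `p`-means by
the Poisson formula.
-/

open Filter Set Polynomial
open scoped ComplexConjugate Topology

/-! ### Moments of the Bergman measure -/

/-- The moment `∫ |z|^(2n) dA_α = n! Γ(α) / Γ(α + n)`. -/
noncomputable def bergmanMoment (α : ℝ) (n : ℕ) : ℝ :=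
  n.factorial * Real.Gamma α / Real.Gamma (α + n)

section Moment

variable {α : ℝ}

lemma bergmanMoment_pos (hα : 0 < α) (n : ℕ) : 0 < bergmanMoment α n := by
  have := Real.Gamma_pos_of_pos hα
  have := Real.Gamma_pos_of_pos (show 0 < α + n by positivity)
  unfold bergmanMoment
  positivity

lemma bergmanMoment_zero (hα : 0 < α) : bergmanMoment α 0 = 1 := by
  simp [bergmanMoment, (Real.Gamma_pos_of_pos hα).ne']

lemma bergmanMoment_succ (hα : 0 < α) (n : ℕ) :
    bergmanMoment α (n + 1) = (n + 1) / α * bergmanMoment (α + 1) n := by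
  unfold bergmanMoment
  rw [Nat.factorial_succ, Real.Gamma_add_one hα.ne', Nat.cast_add_one,
    show α + 1 + n = α + (n + 1) by ring]
  push_cast
  field_simp

lemma bergmanMoment_add_one_le (hα : 0 < α) (n : ℕ) :
    bergmanMoment (α + 1) n ≤ bergmanMoment α n := by
  have hle : α / (α + n) ≤ 1 := div_le_one_of_le₀ (by simp) (by positivity)
  calc bergmanMoment (α + 1) n = α / (α + n) * bergmanMoment α n := by
        unfold bergmanMoment
        rw [add_right_comm, Real.Gamma_add_one hα.ne', Real.Gamma_add_one (by positivity)]
        field_simp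
    _ ≤ bergmanMoment α n := mul_le_of_le_one_left (bergmanMoment_pos hα n).le hle

lemma intervalIntegral_pow_mul_one_sub_rpow {β : ℝ} (hβ : 0 < β) (n : ℕ) :
    ∫ t in (0 : ℝ)..1, t ^ n * (1 - t) ^ (β - 1) = ProbabilityTheory.beta (n + 1) β := by
  rw [ProbabilityTheory.beta_eq_betaIntegralReal _ _ (by positivity) hβ, Complex.betaIntegral,
    ← Complex.ofReal_re (∫ t in (0 : ℝ)..1, t ^ n * (1 - t) ^ (β - 1)),
    ← intervalIntegral.integral_ofReal]
  congr 1
  refine intervalIntegral.integral_congr fun t ht ↦ ?_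
  rw [uIcc_of_le zero_le_one] at ht
  simp [Complex.ofReal_cpow (sub_nonneg.2 ht.2)]

lemma bergmanMoment_eq_intervalIntegral (hα : 1 < α) (n : ℕ) :
    bergmanMoment α n = ∫ t in (0 : ℝ)..1, (α - 1) * (t ^ n * (1 - t) ^ (α - 2)) := by
  have hα' : 0 < α - 1 := sub_pos.2 hα
  have hΓ : Real.Gamma α = (α - 1) * Real.Gamma (α - 1) := by
    rw [← Real.Gamma_add_one hα'.ne', sub_add_cancel]
  rw [intervalIntegral.integral_const_mul, show α - 2 = α - 1 - 1 by ring,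
    intervalIntegral_pow_mul_one_sub_rpow hα', ProbabilityTheory.beta, Real.Gamma_nat_eq_factorial,
    bergmanMoment, hΓ, show (n : ℝ) + 1 + (α - 1) = α + n by ring]
  ring

lemma integral_bergmanMeasure (hα : 1 < α) (f : ℂ → ℝ) :
    ∫ z, f z ∂bergmanMeasure α =
      ∫ z in ball (0 : ℂ) 1, (α - 1) / Real.pi * (1 - ‖z‖ ^ 2) ^ (α - 2) * f z := by
  have hmeas : Measurable fun z : ℂ ↦
      ENNReal.ofReal ((α - 1) / Real.pi * (1 - ‖z‖ ^ 2) ^ (α - 2)) := by fun_prop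
  rw [bergmanMeasure, integral_withDensity_eq_integral_toReal_smul₀ hmeas.aemeasurable (by simp)]
  refine setIntegral_congr_fun measurableSet_ball fun z hz ↦ ?_
  have hz : ‖z‖ ≤ 1 := (mem_ball_zero_iff.1 hz).le
  have hdens : 0 ≤ (α - 1) / Real.pi * (1 - ‖z‖ ^ 2) ^ (α - 2) :=
    mul_nonneg (div_nonneg (sub_nonneg.2 hα.le) Real.pi_nonneg)
      (Real.rpow_nonneg (sub_nonneg.2 (pow_le_one₀ (norm_nonneg z) hz)) _)
  simp only [smul_eq_mul, ENNReal.toReal_ofReal hdens]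

lemma setIntegral_ball_fun_norm_sq (F : ℝ → ℝ) :
    ∫ z in ball (0 : ℂ) 1, F (‖z‖ ^ 2) = Real.pi * ∫ t in (0 : ℝ)..1, F t := by
  let G : ℝ → ℝ := (Iio 1).indicator F
  have hball (z : ℂ) : (ball (0 : ℂ) 1).indicator (fun z ↦ F (‖z‖ ^ 2)) z = G (‖z‖ ^ 2) := by
    simp [G, indicator]
  have hvol : (volume : Measure ℂ).real (ball 0 1) = Real.pi := by simp [Measure.real]
  calc ∫ z in ball (0 : ℂ) 1, F (‖z‖ ^ 2) = ∫ z : ℂ, G (‖z‖ ^ 2) := by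
        rw [← integral_indicator measurableSet_ball]
        exact integral_congr_ae (.of_forall hball)
    _ = Real.pi * ∫ y in Ioi (0 : ℝ), (2 * y ^ ((2 : ℝ) - 1)) • G (y ^ (2 : ℝ)) := by
        rw [integral_fun_norm_addHaar volume fun y ↦ G (y ^ 2), hvol,
          Complex.finrank_real_complex, nsmul_eq_mul, smul_eq_mul, ← mul_assoc, mul_comm _ Real.pi,
          mul_assoc, ← integral_const_mul]
        norm_num [mul_assoc]
    _ = Real.pi * ∫ t in Ioi (0 : ℝ), G t := by
        rw [integral_comp_rpow_Ioi_of_pos two_pos]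
    _ = Real.pi * ∫ t in (0 : ℝ)..1, F t := by
        rw [setIntegral_indicator measurableSet_Iio, Ioi_inter_Iio, ← integral_Ioc_eq_integral_Ioo,
          intervalIntegral.integral_of_le zero_le_one]

lemma integral_norm_pow_bergmanMeasure (hα : 1 < α) (n : ℕ) :
    ∫ z, ‖z‖ ^ (2 * n) ∂bergmanMeasure α = bergmanMoment α n := by
  have hπ := Real.pi_ne_zero
  simp_rw [integral_bergmanMeasure hα, pow_mul]
  rw [setIntegral_ball_fun_norm_sq fun t ↦ (α - 1) / Real.pi * (1 - t) ^ (α - 2) * t ^ n,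
    bergmanMoment_eq_intervalIntegral hα, ← intervalIntegral.integral_const_mul]
  congr 1 with t
  field_simp

end Moment

/-! ### Integration against the Bergman measure -/

lemma isProbabilityMeasure_bergmanMeasure {α : ℝ} (hα : 1 < α) :
    IsProbabilityMeasure (bergmanMeasure α) := by
  have h := integral_norm_pow_bergmanMeasure hα 0
  rw [bergmanMoment_zero (by linarith)] at h
  exact ⟨(ENNReal.toReal_eq_one_iff _).1 (by simpa [Measure.real] using h)⟩

lemma bergmanMeasure_absolutelyContinuous (α : ℝ) :
    bergmanMeasure α ≪ volume.restrict (ball 0 1) :=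
  withDensity_absolutelyContinuous _ _

lemma ae_mem_ball_bergmanMeasure (α : ℝ) : ∀ᵐ z ∂bergmanMeasure α, z ∈ ball (0 : ℂ) 1 :=
  (bergmanMeasure_absolutelyContinuous α).ae_le (ae_restrict_mem measurableSet_ball)

instance smulInvariantMeasure_circle_bergmanMeasure (α : ℝ) :
    SMulInvariantMeasure Circle ℂ (bergmanMeasure α) where
  measure_preimage_smul c s hs := by
    have hrot : MeasurePreserving (fun z : ℂ ↦ c • z) := (rotation c).measurePreserving
    have hnorm (z : ℂ) : ‖c • z‖ = ‖z‖ := (rotation c).norm_map z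
    have hball : (fun z : ℂ ↦ c • z) ⁻¹' ball 0 1 = ball 0 1 := by
      ext z
      simp [hnorm]
    have hmeas : Measurable fun z : ℂ ↦
        ENNReal.ofReal ((α - 1) / Real.pi * (1 - ‖z‖ ^ 2) ^ (α - 2)) := by fun_prop
    rw [bergmanMeasure, withDensity_apply _ hs, withDensity_apply _ (hrot.measurable hs),
      Measure.restrict_restrict hs, Measure.restrict_restrict (hrot.measurable hs),
      ← hrot.setLIntegral_comp_preimage (hs.inter measurableSet_ball) hmeas]
    simp only [hnorm, preimage_inter, hball]

section Integration

variable {E : Type*} [NormedAddCommGroup E] {α : ℝ} {f : ℂ → E}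

lemma aestronglyMeasurable_bergmanMeasure (hf : ContinuousOn f (ball 0 1)) :
    AEStronglyMeasurable f (bergmanMeasure α) :=
  (hf.aestronglyMeasurable measurableSet_ball).mono_ac (bergmanMeasure_absolutelyContinuous α)

lemma integrable_bergmanMeasure (hα : 1 < α) (hf : ContinuousOn f (closedBall 0 1)) :
    Integrable f (bergmanMeasure α) := by
  have := isProbabilityMeasure_bergmanMeasure hα
  obtain ⟨C, hC⟩ := (isCompact_closedBall (0 : ℂ) 1).exists_bound_of_continuousOn hf
  refine .of_bound (aestronglyMeasurable_bergmanMeasure (hf.mono ball_subset_closedBall)) C ?_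
  filter_upwards [ae_mem_ball_bergmanMeasure α] with z hz using hC z (ball_subset_closedBall hz)

lemma tendsto_integral_bergmanMeasure_of_bounded [NormedSpace ℝ E] (hα : 1 < α) {ι : Type*}
    {l : Filter ι} [l.IsCountablyGenerated] {F : ι → ℂ → E} {C : ℝ}
    (hF : ∀ᶠ i in l, ContinuousOn (F i) (ball 0 1))
    (hC : ∀ᶠ i in l, ∀ z ∈ ball (0 : ℂ) 1, ‖F i z‖ ≤ C)
    (hlim : ∀ z ∈ ball (0 : ℂ) 1, Tendsto (F · z) l (𝓝 (f z))) :
    Tendsto (fun i ↦ ∫ z, F i z ∂bergmanMeasure α) l (𝓝 (∫ z, f z ∂bergmanMeasure α)) := by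
  have := isProbabilityMeasure_bergmanMeasure hα
  refine tendsto_integral_filter_of_dominated_convergence (fun _ ↦ C)
    (hF.mono fun i hi ↦ aestronglyMeasurable_bergmanMeasure hi) ?_ (integrable_const C) ?_
  · filter_upwards [hC] with i hi
    filter_upwards [ae_mem_ball_bergmanMeasure α] with z hz using hi z hz
  · filter_upwards [ae_mem_ball_bergmanMeasure α] with z hz using hlim z hz

lemma continuousOn_integral_bergmanMeasure [NormedSpace ℝ E] (hα : 1 < α) {X : Type*}
    [TopologicalSpace X] [FirstCountableTopology X] {F : X → ℂ → E} {K : Set X} (hK : IsCompact K)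
    (hF : ContinuousOn F.uncurry (K ×ˢ closedBall 0 1)) :
    ContinuousOn (fun x ↦ ∫ z, F x z ∂bergmanMeasure α) K := by
  obtain ⟨C, hC⟩ := (hK.prod (isCompact_closedBall (0 : ℂ) 1)).exists_bound_of_continuousOn hF
  intro x hx
  refine tendsto_integral_bergmanMeasure_of_bounded hα (C := C) ?_ ?_ fun z hz ↦ ?_
  · filter_upwards [self_mem_nhdsWithin] with y hy
    exact hF.comp (f := (y, ·)) (by fun_prop) fun z hz ↦ ⟨hy, ball_subset_closedBall hz⟩
  · filter_upwards [self_mem_nhdsWithin] with y hy z hz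
      using hC (y, z) ⟨hy, ball_subset_closedBall hz⟩
  · exact hF.comp (f := (·, z)) (by fun_prop) (fun y hy ↦ ⟨hy, ball_subset_closedBall hz⟩) x hx

lemma continuous_integral_bergmanMeasure [NormedSpace ℝ E] (hα : 1 < α) {X : Type*}
    [TopologicalSpace X] [FirstCountableTopology X] [WeaklyLocallyCompactSpace X] {F : X → ℂ → E}
    (hF : Continuous F.uncurry) :
    Continuous fun x ↦ ∫ z, F x z ∂bergmanMeasure α := by
  refine continuous_iff_continuousAt.2 fun x ↦ ?_
  obtain ⟨K, hK, hKx⟩ := exists_compact_mem_nhds x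
  exact (continuousOn_integral_bergmanMeasure hα hK hF.continuousOn).continuousAt hKx

end Integration

/-! ### Orthogonality of monomials and Bergman norms of polynomials -/

-- Rotating by `π / (m - n)` multiplies the integrand by `-1`.
lemma integral_pow_mul_conj_pow_eq_zero (μ : Measure ℂ) [SMulInvariantMeasure Circle ℂ μ]
    {m n : ℕ} (hmn : m ≠ n) : ∫ z, z ^ m * conj (z ^ n) ∂μ = 0 := by
  have hmn' : (m : ℂ) - n ≠ 0 := sub_ne_zero.2 (by exact_mod_cast hmn)
  let c : Circle := Circle.exp (Real.pi / (m - n))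
  have hc : (c : ℂ) ^ m * conj ((c : ℂ) ^ n) = -1 := by
    rw [map_pow, ← Circle.coe_inv_eq_conj, ← Circle.exp_neg, Circle.coe_exp, Circle.coe_exp,
      ← Complex.exp_nat_mul, ← Complex.exp_nat_mul, ← Complex.exp_add, ← Complex.exp_pi_mul_I]
    congr 1
    push_cast
    field_simp
    ring
  have hneg : ∫ z, z ^ m * conj (z ^ n) ∂μ = -∫ z, z ^ m * conj (z ^ n) ∂μ := by
    rw [← integral_neg]
    conv_lhs => rw [← integral_smul_eq_self _ (g := c)]
    congr 1 with z
    rw [Circle.smul_def, smul_eq_mul, mul_pow, mul_pow, map_mul, mul_mul_mul_comm, hc, neg_one_mul]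
  exact self_eq_neg.1 hneg

/-- The squared Bergman norm `∫ |P(√s z)|² dA_α` of a dilated polynomial, as a polynomial in `s`
given by the coefficients of `P`. -/
noncomputable def bergmanNormSq (α : ℝ) (P : ℂ[X]) (s : ℝ) : ℝ :=
  P.sum fun n a ↦ ‖a‖ ^ 2 * s ^ n * bergmanMoment α n

section Orthogonality

variable {α : ℝ}

lemma integral_pow_mul_conj_pow_self (hα : 1 < α) (n : ℕ) :
    ∫ z, z ^ n * conj (z ^ n) ∂bergmanMeasure α = bergmanMoment α n := by
  rw [← integral_norm_pow_bergmanMeasure hα, ← integral_complex_ofReal]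
  congr 1 with z
  rw [Complex.mul_conj', norm_pow, pow_mul']
  push_cast
  rfl

lemma integral_eval_mul_conj_eval (hα : 1 < α) {P Q : ℂ[X]} {N : ℕ} (hP : P.natDegree < N)
    (hQ : Q.natDegree < N) :
    ∫ z, P.eval z * conj (Q.eval z) ∂bergmanMeasure α =
      ∑ n ∈ Finset.range N, P.coeff n * conj (Q.coeff n) * bergmanMoment α n := by
  have hexpand (z : ℂ) : P.eval z * conj (Q.eval z) = ∑ m ∈ Finset.range N, ∑ n ∈ Finset.range N,
      P.coeff m * conj (Q.coeff n) * (z ^ m * conj (z ^ n)) := by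
    rw [eval_eq_sum_range' hP, eval_eq_sum_range' hQ, map_sum, Finset.sum_mul_sum]
    simp only [map_mul, mul_mul_mul_comm]
  simp_rw [hexpand]
  rw [integral_finsetSum _ fun m _ ↦ integrable_bergmanMeasure hα (by fun_prop)]
  refine Finset.sum_congr rfl fun m hm ↦ ?_
  rw [integral_finsetSum _ fun n _ ↦ integrable_bergmanMeasure hα (by fun_prop),
    Finset.sum_eq_single_of_mem m hm fun n _ hn ↦ by
      rw [integral_const_mul, integral_pow_mul_conj_pow_eq_zero _ hn.symm, mul_zero],
    integral_const_mul, integral_pow_mul_conj_pow_self hα]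

lemma bergmanNormSq_eq_sum_range (α s : ℝ) {P : ℂ[X]} {N : ℕ} (hN : P.natDegree < N) :
    bergmanNormSq α P s = ∑ n ∈ Finset.range N, ‖P.coeff n‖ ^ 2 * s ^ n * bergmanMoment α n :=
  sum_over_range' _ (by simp) N hN

lemma natDegree_comp_C_mul_X_le (P : ℂ[X]) (c : ℂ) :
    (P.comp (C c * X)).natDegree ≤ P.natDegree := by
  rw [natDegree_le_iff_coeff_eq_zero]
  intro n hn
  rw [comp_C_mul_X_coeff, coeff_eq_zero_of_natDegree_lt hn, zero_mul]

lemma norm_sqrt_sq {s : ℝ} (hs : 0 ≤ s) : ‖(√s : ℂ)‖ ^ 2 = s := by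
  rw [Complex.norm_real, Real.norm_eq_abs, sq_abs, Real.sq_sqrt hs]

lemma integral_norm_sq_eval_sqrt_mul (hα : 1 < α) (P : ℂ[X]) {s : ℝ} (hs : 0 ≤ s) :
    ∫ z, ‖P.eval (√s * z)‖ ^ 2 ∂bergmanMeasure α = bergmanNormSq α P s := by
  have hdeg := Nat.lt_succ_of_le (natDegree_comp_C_mul_X_le P √s)
  have h := integral_eval_mul_conj_eval hα hdeg hdeg
  simp only [Complex.mul_conj', eval_comp, eval_mul, eval_C, eval_X, comp_C_mul_X_coeff] at h
  rw [bergmanNormSq_eq_sum_range α s (Nat.lt_succ_self _), ← Complex.ofReal_inj,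
    ← integral_complex_ofReal]
  push_cast
  rw [h]
  refine Finset.sum_congr rfl fun n _ ↦ ?_
  rw [norm_mul, norm_pow, Complex.ofReal_mul, mul_pow, Complex.ofReal_pow, ← pow_mul,
    pow_mul' _ n 2, ← Complex.ofReal_pow ‖(√s : ℂ)‖, norm_sqrt_sq hs]

lemma integral_norm_sq_eval (hα : 1 < α) (P : ℂ[X]) :
    ∫ z, ‖P.eval z‖ ^ 2 ∂bergmanMeasure α = bergmanNormSq α P 1 := by
  simpa using integral_norm_sq_eval_sqrt_mul hα P zero_le_one

lemma bergmanNormSq_nonneg (hα : 0 < α) (P : ℂ[X]) {s : ℝ} (hs : 0 ≤ s) :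
    0 ≤ bergmanNormSq α P s :=
  Finset.sum_nonneg fun n _ ↦ mul_nonneg (by positivity) (bergmanMoment_pos hα n).le

lemma bergmanNormSq_add_one_le (hα : 0 < α) (P : ℂ[X]) {s : ℝ} (hs : 0 ≤ s) :
    bergmanNormSq (α + 1) P s ≤ bergmanNormSq α P s := by
  simp only [bergmanNormSq, Polynomial.sum]
  gcongr with n
  exact bergmanMoment_add_one_le hα n

lemma norm_sq_mul_bergmanMoment_succ (hα : 0 < α) (n : ℕ) (c : ℂ) :
    ‖c‖ ^ 2 * (n + 1) * bergmanMoment α (n + 1) =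
      1 / α * (‖c * (n + 1)‖ ^ 2 * bergmanMoment (α + 1) n) := by
  have hnorm : ‖(n + 1 : ℂ)‖ = n + 1 := by exact_mod_cast Complex.norm_natCast (n + 1)
  rw [bergmanMoment_succ hα, norm_mul, hnorm]
  field_simp

lemma hasDerivAt_bergmanNormSq (hα : 0 < α) (P : ℂ[X]) (s : ℝ) :
    HasDerivAt (bergmanNormSq α P) (1 / α * bergmanNormSq (α + 1) (derivative P) s) s := by
  have hsum : bergmanNormSq α P = fun s ↦ ∑ n ∈ Finset.range (P.natDegree + 1 + 1),
      ‖P.coeff n‖ ^ 2 * s ^ n * bergmanMoment α n :=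
    funext fun s ↦ bergmanNormSq_eq_sum_range α s (by lia)
  have hderiv := HasDerivAt.fun_sum (u := Finset.range (P.natDegree + 1 + 1)) fun n _ ↦
    ((hasDerivAt_pow n s).const_mul (‖P.coeff n‖ ^ 2)).mul_const (bergmanMoment α n)
  rw [hsum]
  refine hderiv.congr_deriv ?_
  rw [bergmanNormSq_eq_sum_range (N := P.natDegree + 1) _ _
    (by have := natDegree_derivative_le P; lia), Finset.sum_range_succ' _ (P.natDegree + 1),
    Finset.mul_sum]
  simp only [Nat.cast_zero, zero_mul, mul_zero, add_zero]
  refine Finset.sum_congr rfl fun n _ ↦ ?_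
  rw [coeff_derivative, add_tsub_cancel_right, Nat.cast_add_one]
  linear_combination s ^ n * norm_sq_mul_bergmanMoment_succ hα n (P.coeff (n + 1))

lemma integral_re_mul_derivative_mul_conj (hα : 1 < α) (P : ℂ[X]) :
    ∫ z, (z * (derivative P).eval z * conj (P.eval z)).re ∂bergmanMeasure α =
      1 / α * bergmanNormSq (α + 1) (derivative P) 1 := by
  have hdeg : (derivative P).natDegree < P.natDegree + 1 := by
    have := natDegree_derivative_le P
    lia
  have hdegX : (X * derivative P).natDegree < P.natDegree + 1 + 1 := by
    have := natDegree_mul_le (p := (X : ℂ[X])) (q := derivative P)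
    have := natDegree_X_le (R := ℂ)
    lia
  have h := integral_eval_mul_conj_eval hα hdegX (show P.natDegree < _ by lia)
  rw [Finset.sum_range_succ'] at h
  simp only [eval_mul, eval_X, coeff_X_mul_zero, zero_mul, add_zero, coeff_X_mul,
    coeff_derivative] at h
  have hre := integral_re (𝕜 := ℂ) (μ := bergmanMeasure α)
    (f := fun z ↦ z * (derivative P).eval z * conj (P.eval z))
    (integrable_bergmanMeasure hα (by fun_prop))
  simp only [RCLike.re_eq_complex_re] at hre
  rw [hre, h, Complex.re_sum, bergmanNormSq_eq_sum_range _ _ hdeg, Finset.mul_sum]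
  refine Finset.sum_congr rfl fun n _ ↦ ?_
  rw [one_pow, mul_one, coeff_derivative, ← norm_sq_mul_bergmanMoment_succ (by linarith),
    mul_right_comm (P.coeff (n + 1)), Complex.mul_conj']
  exact_mod_cast rfl

end Orthogonality

/-! ### Hardy–Stein identity -/

lemma surjective_derivative (K : Type*) [Field K] [CharZero K] :
    Function.Surjective (derivative : K[X] → K[X]) := by
  intro P
  induction P using Polynomial.induction_on' with
  | add P Q hP hQ =>
    obtain ⟨⟨P', rfl⟩, ⟨Q', rfl⟩⟩ := And.intro hP hQ
    exact ⟨P' + Q', derivative_add⟩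
  | monomial n c =>
    refine ⟨monomial (n + 1) (c / (n + 1)), ?_⟩
    rw [derivative_monomial, add_tsub_cancel_right, Nat.cast_add_one,
      div_mul_cancel₀ _ n.cast_add_one_ne_zero]

lemma exists_derivative_eq_of_abs_eval_sub_le {a b δ : ℝ} {f f' : ℝ → ℝ} {P : ℝ[X]}
    (hab : a ≤ b) (hf : ∀ v ∈ Icc a b, HasDerivWithinAt f (f' v) (Icc a b) v)
    (hP : ∀ v ∈ Icc a b, |P.eval v - f' v| ≤ δ) :
    ∃ Q : ℝ[X], derivative Q = P ∧ ∀ v ∈ Icc a b, |Q.eval v - f v| ≤ δ * (b - a) := by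
  obtain ⟨Q, rfl⟩ := surjective_derivative ℝ P
  refine ⟨Q + C (f a - Q.eval a), by simp, fun v hv ↦ ?_⟩
  have hδ : 0 ≤ δ := (abs_nonneg _).trans (hP v hv)
  calc |(Q + C (f a - Q.eval a)).eval v - f v| = ‖(Q.eval v - f v) - (Q.eval a - f a)‖ := by
        rw [eval_add, eval_C, Real.norm_eq_abs]
        ring_nf
    _ ≤ δ * ‖v - a‖ := (convex_Icc a b).norm_image_sub_le_of_norm_hasDerivWithin_le
        (fun x hx ↦ (Q.hasDerivWithinAt x _).sub (hf x hx)) hP (left_mem_Icc.2 hab) hv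
    _ ≤ δ * (b - a) := by
        rw [Real.norm_of_nonneg (sub_nonneg.2 hv.1)]
        gcongr
        exact hv.2

-- The second bound concerns `(v φ')' = φ' + v φ''`, which appears in the Hardy–Stein identity.
lemma exists_polynomial_near_of_hasDerivWithinAt {M δ : ℝ} {φ φ' φ'' : ℝ → ℝ} (hM : 0 ≤ M)
    (hφ : ∀ v ∈ Icc 0 M, HasDerivWithinAt φ (φ' v) (Icc 0 M) v)
    (hφ' : ∀ v ∈ Icc 0 M, HasDerivWithinAt φ' (φ'' v) (Icc 0 M) v)
    (hφ'' : ContinuousOn φ'' (Icc 0 M)) (hδ : 0 < δ) :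
    ∃ Q : ℝ[X], ∀ v ∈ Icc 0 M, |Q.eval v - φ v| ≤ δ ∧
      |(derivative (X * derivative Q)).eval v - (φ' v + v * φ'' v)| ≤ δ := by
  let η := δ / (1 + M) ^ 2
  have hη : 0 < η := by positivity
  have hηδ : η * (1 + M) ^ 2 = δ := div_mul_cancel₀ _ (by positivity)
  obtain ⟨P, hP⟩ := exists_polynomial_near_of_continuousOn 0 M φ'' hφ'' η hη
  obtain ⟨R, rfl, hR⟩ := exists_derivative_eq_of_abs_eval_sub_le hM hφ' fun v hv ↦ (hP v hv).le
  obtain ⟨Q, rfl, hQ⟩ := exists_derivative_eq_of_abs_eval_sub_le hM hφ hR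
  refine ⟨Q, fun v hv ↦ ⟨(hQ v hv).trans (by nlinarith [mul_nonneg hη.le hM]), ?_⟩⟩
  calc |(derivative (X * derivative Q)).eval v - (φ' v + v * φ'' v)|
      = |((derivative Q).eval v - φ' v) + v * ((derivative (derivative Q)).eval v - φ'' v)| := by
        simp only [derivative_mul, derivative_X, eval_add, eval_mul, eval_one, eval_X]
        ring_nf
    _ ≤ |(derivative Q).eval v - φ' v| + |v| * |(derivative (derivative Q)).eval v - φ'' v| :=
        (abs_add_le _ _).trans_eq (by rw [abs_mul])
    _ ≤ η * (M - 0) + M * η := by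
        rw [abs_of_nonneg hv.1]
        gcongr
        exacts [hR v hv, hv.2, (hP v hv).le]
    _ ≤ δ := by nlinarith [mul_nonneg hη.le (sq_nonneg M)]

lemma abs_integral_sub_integral_le {X : Type*} [MeasurableSpace X] {μ : Measure X}
    [IsProbabilityMeasure μ] {F G : X → ℝ} {δ : ℝ} (hF : Integrable F μ) (hG : Integrable G μ)
    (h : ∀ᵐ x ∂μ, |F x - G x| ≤ δ) : |∫ x, F x ∂μ - ∫ x, G x ∂μ| ≤ δ := by
  rw [← integral_sub hF hG]
  simpa using norm_integral_le_of_norm_le_const (f := fun x ↦ F x - G x) h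

lemma ofReal_mul_mem_closedBall {r : ℝ} (hr : 0 ≤ r) {z : ℂ} (hz : z ∈ closedBall 0 1) :
    r * z ∈ closedBall (0 : ℂ) r := by
  rw [mem_closedBall_zero_iff, norm_mul, Complex.norm_real, Real.norm_of_nonneg hr]
  exact mul_le_of_le_one_right hr (mem_closedBall_zero_iff.1 hz)

lemma tendstoUniformlyOn_nhdsGT_zero_of_abs_sub_le {X : Type*} {F : ℝ → X → ℝ} {f : X → ℝ}
    {s : Set X} {K : ℝ} (h : ∀ δ > 0, ∀ x ∈ s, |F δ x - f x| ≤ K * δ) :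
    TendstoUniformlyOn F f (𝓝[>] 0) s := by
  rw [Metric.tendstoUniformlyOn_iff]
  intro ε hε
  have hlim : Tendsto (fun δ : ℝ ↦ K * δ) (𝓝[>] 0) (𝓝 0) :=
    tendsto_nhdsWithin_of_tendsto_nhds (by simpa using (continuous_const_mul K).tendsto 0)
  filter_upwards [hlim.eventually_lt_const hε, self_mem_nhdsWithin] with δ hδε hδ x hx
  rw [dist_comm, Real.dist_eq]
  exact (h δ hδ x hx).trans_lt hδε

section HardyStein

variable {α : ℝ}

-- For a monomial `Q` the integrand is the squared modulus of a power of `g`.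
lemma hasDerivAt_integral_eval_norm_sq (hα : 1 < α) (g : ℂ[X]) (Q : ℝ[X]) {s : ℝ} (hs : 0 < s) :
    HasDerivAt (fun s : ℝ ↦ ∫ z, Q.eval (‖g.eval (√s * z)‖ ^ 2) ∂bergmanMeasure α)
      (1 / α * ∫ z, ‖(derivative g).eval (√s * z)‖ ^ 2 *
        (derivative (X * derivative Q)).eval (‖g.eval (√s * z)‖ ^ 2)
        ∂bergmanMeasure (α + 1)) s := by
  have hα' : 1 < α + 1 := by linarith
  induction Q using Polynomial.induction_on' with
  | add Q R hQ hR =>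
    refine ((hQ.add hR).congr_of_eventuallyEq (.of_forall fun t ↦ ?_)).congr_deriv ?_
    · simp only [eval_add, Pi.add_apply]
      exact integral_add (integrable_bergmanMeasure hα (by fun_prop))
        (integrable_bergmanMeasure hα (by fun_prop))
    · simp only [map_add, mul_add, eval_add]
      rw [integral_add (integrable_bergmanMeasure hα' (by fun_prop))
        (integrable_bergmanMeasure hα' (by fun_prop)), mul_add]
  | monomial j c =>
    have hpow : (fun s : ℝ ↦ ∫ z, (monomial j c).eval (‖g.eval (√s * z)‖ ^ 2) ∂bergmanMeasure α)
        =ᶠ[𝓝 s] fun s ↦ c * bergmanNormSq α (g ^ j) s := by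
      filter_upwards [lt_mem_nhds hs] with t ht
      simp only [← integral_norm_sq_eval_sqrt_mul hα _ ht.le, ← integral_const_mul, eval_monomial,
        eval_pow, norm_pow, ← pow_mul, mul_comm]
    have hderiv := (hasDerivAt_bergmanNormSq (zero_lt_one.trans hα) (g ^ j) s).const_mul c
    refine (hderiv.congr_of_eventuallyEq hpow).congr_deriv ?_
    rw [← integral_norm_sq_eval_sqrt_mul hα' _ hs.le, mul_left_comm, ← integral_const_mul]
    congr 2 with z
    rcases j with _ | j
    · simp
    · have hnorm : ‖(j + 1 : ℂ)‖ = j + 1 := by exact_mod_cast Complex.norm_natCast (j + 1)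
      simp only [derivative_pow, derivative_monomial, X_mul_monomial, eval_mul, eval_pow, eval_C,
        eval_monomial, norm_mul, norm_pow, add_tsub_cancel_right, Nat.cast_add_one, hnorm]
      ring

lemma abs_integral_norm_sq_mul_comp_sub_le (hα : 1 < α) (g h : ℂ[X]) {F G : ℝ → ℝ}
    (hF : ContinuousOn F (Ici 0)) (hG : ContinuousOn G (Ici 0)) {s S M B δ : ℝ} (hs : s ≤ S)
    (hg : ∀ w ∈ closedBall (0 : ℂ) √S, ‖g.eval w‖ ^ 2 ≤ M)
    (hh : ∀ w ∈ closedBall (0 : ℂ) √S, ‖h.eval w‖ ^ 2 ≤ B)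
    (hFG : ∀ v ∈ Icc 0 M, |F v - G v| ≤ δ) :
    |∫ z, ‖h.eval (√s * z)‖ ^ 2 * F (‖g.eval (√s * z)‖ ^ 2) ∂bergmanMeasure α -
      ∫ z, ‖h.eval (√s * z)‖ ^ 2 * G (‖g.eval (√s * z)‖ ^ 2) ∂bergmanMeasure α| ≤ B * δ := by
  have := isProbabilityMeasure_bergmanMeasure hα
  have hint {F : ℝ → ℝ} (hF : ContinuousOn F (Ici 0)) : Integrable
      (fun z : ℂ ↦ ‖h.eval (√s * z)‖ ^ 2 * F (‖g.eval (√s * z)‖ ^ 2)) (bergmanMeasure α) :=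
    integrable_bergmanMeasure hα <| .mul (by fun_prop)
      (hF.comp_continuous (by fun_prop) fun z ↦ mem_Ici.2 (sq_nonneg _)).continuousOn
  refine abs_integral_sub_integral_le (hint hF) (hint hG) ?_
  filter_upwards [ae_mem_ball_bergmanMeasure α] with z hz
  have hw := closedBall_subset_closedBall (Real.sqrt_le_sqrt hs)
    (ofReal_mul_mem_closedBall (Real.sqrt_nonneg s) (ball_subset_closedBall hz))
  rw [← mul_sub, abs_mul, abs_of_nonneg (sq_nonneg _)]
  exact mul_le_mul (hh _ hw) (hFG _ ⟨sq_nonneg _, hg _ hw⟩) (abs_nonneg _)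
    ((sq_nonneg _).trans (hh _ hw))

lemma hasDerivAt_integral_comp_norm_sq (hα : 1 < α) (g : ℂ[X]) {φ φ' φ'' : ℝ → ℝ}
    (hφ : ∀ v ∈ Ici 0, HasDerivWithinAt φ (φ' v) (Ici 0) v)
    (hφ' : ∀ v ∈ Ici 0, HasDerivWithinAt φ' (φ'' v) (Ici 0) v)
    (hφ'' : ContinuousOn φ'' (Ici 0)) {s : ℝ} (hs : 0 < s) :
    HasDerivAt (fun s : ℝ ↦ ∫ z, φ (‖g.eval (√s * z)‖ ^ 2) ∂bergmanMeasure α)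
      (1 / α * ∫ z, ‖(derivative g).eval (√s * z)‖ ^ 2 *
        (φ' (‖g.eval (√s * z)‖ ^ 2) + ‖g.eval (√s * z)‖ ^ 2 * φ'' (‖g.eval (√s * z)‖ ^ 2))
        ∂bergmanMeasure (α + 1)) s := by
  have hα' : 1 < α + 1 := by linarith
  obtain ⟨M, hM⟩ := (isCompact_closedBall (0 : ℂ) √(s + 1)).exists_bound_of_continuousOn
    (f := fun w ↦ ‖g.eval w‖ ^ 2) (by fun_prop)
  obtain ⟨B, hB⟩ := (isCompact_closedBall (0 : ℂ) √(s + 1)).exists_bound_of_continuousOn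
    (f := fun w ↦ ‖(derivative g).eval w‖ ^ 2) (by fun_prop)
  simp only [norm_pow, norm_norm] at hM hB
  have hM0 : 0 ≤ M := (sq_nonneg _).trans (hM 0 (mem_closedBall_self (Real.sqrt_nonneg _)))
  have happrox : ∀ δ : ℝ, 0 < δ → _ := fun δ hδ ↦
    exists_polynomial_near_of_hasDerivWithinAt (δ := δ) hM0
      (fun v hv ↦ (hφ v hv.1).mono Icc_subset_Ici_self)
      (fun v hv ↦ (hφ' v hv.1).mono Icc_subset_Ici_self) (hφ''.mono Icc_subset_Ici_self) hδ
  choose! Q hQ using happrox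
  have hφcont : ContinuousOn φ (Ici 0) := fun v hv ↦ (hφ v hv).continuousWithinAt
  have hφ'cont : ContinuousOn φ' (Ici 0) := fun v hv ↦ (hφ' v hv).continuousWithinAt
  have hval : TendstoUniformlyOn
      (fun δ t ↦ ∫ z, (Q δ).eval (‖g.eval (√t * z)‖ ^ 2) ∂bergmanMeasure α)
      (fun t ↦ ∫ z, φ (‖g.eval (√t * z)‖ ^ 2) ∂bergmanMeasure α) (𝓝[>] 0) (Ioo 0 (s + 1)) := by
    refine tendstoUniformlyOn_nhdsGT_zero_of_abs_sub_le (K := 1) fun δ hδ t ht ↦ ?_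
    simpa using abs_integral_norm_sq_mul_comp_sub_le hα g 1 (Q δ).continuous.continuousOn hφcont
      ht.2.le hM (B := 1) (by simp) fun v hv ↦ (hQ δ hδ v hv).1
  refine hasDerivAt_of_tendstoUniformlyOn isOpen_Ioo (g' := fun s ↦ 1 / α * ∫ z,
      ‖(derivative g).eval (√s * z)‖ ^ 2 * (φ' (‖g.eval (√s * z)‖ ^ 2) +
        ‖g.eval (√s * z)‖ ^ 2 * φ'' (‖g.eval (√s * z)‖ ^ 2)) ∂bergmanMeasure (α + 1))
    (tendstoUniformlyOn_nhdsGT_zero_of_abs_sub_le (K := 1 / α * B) fun δ hδ t ht ↦ ?_)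
    (.of_forall fun δ t ht ↦ hasDerivAt_integral_eval_norm_sq hα g (Q δ) ht.1)
    (fun t ht ↦ hval.tendsto_at ht) ⟨hs, lt_add_one s⟩
  rw [← mul_sub, abs_mul, abs_of_nonneg (by positivity), mul_assoc]
  gcongr
  exact abs_integral_norm_sq_mul_comp_sub_le hα' g (derivative g) (Polynomial.continuousOn _)
    (hφ'cont.add (continuousOn_id.mul hφ'')) ht.2.le hM hB fun v hv ↦ (hQ δ hδ v hv).2

end HardyStein

/-! ### Logarithmic Sobolev inequality for polynomials -/

lemma mul_log_le_mul_log_add {k ψ b B : ℝ} (hk : 0 ≤ k) (hψ : 0 < ψ) (hb : 0 < b) (hB : 0 < B) :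
    k * Real.log ψ ≤
      k * Real.log k + ((Real.log B - Real.log b - 1) * k + b / B * ψ) := by
  rcases hk.eq_or_lt with rfl | hk
  · simp only [zero_mul, mul_zero, zero_add]
    positivity
  have hlog := Real.log_le_sub_one_of_pos (x := ψ * b / (B * k)) (by positivity)
  rw [Real.log_div (by positivity) (by positivity), Real.log_mul hψ.ne' hb.ne',
    Real.log_mul hB.ne' hk.ne'] at hlog
  have hmul := mul_le_mul_of_nonneg_left hlog hk.le
  have hcancel : k * (ψ * b / (B * k) - 1) = b / B * ψ - k := by field_simp
  linarith

lemma integral_mul_log_le_of_pos {X : Type*} [MeasurableSpace X] {μ : Measure X} {k ψ : X → ℝ}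
    (hk0 : ∀ x, 0 ≤ k x) (hψ0 : ∀ x, 0 < ψ x) (hk : Integrable k μ) (hψ : Integrable ψ μ)
    (hkk : Integrable (fun x ↦ k x * Real.log (k x)) μ)
    (hkψ : Integrable (fun x ↦ k x * Real.log (ψ x)) μ) :
    ∫ x, k x * Real.log (ψ x) ∂μ ≤
      ∫ x, k x * Real.log (k x) ∂μ - (∫ x, k x ∂μ) * Real.log (∫ x, k x ∂μ) +
        (∫ x, k x ∂μ) * Real.log (∫ x, ψ x ∂μ) := by
  rcases (integral_nonneg hk0 : 0 ≤ ∫ x, k x ∂μ).eq_or_lt with hb | hb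
  · have hk_zero : k =ᵐ[μ] 0 := (integral_eq_zero_iff_of_nonneg hk0 hk).1 hb.symm
    have hvanish (w : X → ℝ) : ∫ x, k x * w x ∂μ = 0 :=
      integral_eq_zero_of_ae (hk_zero.mono fun x hx ↦ by simp [hx])
    simp [hvanish, ← hb]
  have hμ : μ ≠ 0 := by
    rintro rfl
    simp at hb
  have hB : 0 < ∫ x, ψ x ∂μ := by
    rw [integral_pos_iff_support_of_nonneg (fun x ↦ (hψ0 x).le) hψ,
      Function.support_eq_univ fun x ↦ (hψ0 x).ne']
    exact Measure.measure_univ_pos.2 hμ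
  set b := ∫ x, k x ∂μ
  set B := ∫ x, ψ x ∂μ
  have hlin : Integrable (fun x ↦ (Real.log B - Real.log b - 1) * k x + b / B * ψ x) μ :=
    (hk.const_mul _).add (hψ.const_mul _)
  calc ∫ x, k x * Real.log (ψ x) ∂μ
      ≤ ∫ x, (k x * Real.log (k x) + ((Real.log B - Real.log b - 1) * k x + b / B * ψ x)) ∂μ :=
        integral_mono hkψ (hkk.add hlin)
          fun x ↦ mul_log_le_mul_log_add (hk0 x) (hψ0 x) hb hB
    _ = ∫ x, k x * Real.log (k x) ∂μ + ((Real.log B - Real.log b - 1) * b + b / B * B) := by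
        rw [integral_add hkk hlin,
          integral_add (hk.const_mul _) (hψ.const_mul _), integral_const_mul, integral_const_mul]
    _ = ∫ x, k x * Real.log (k x) ∂μ - b * Real.log b + b * Real.log B := by
        rw [div_mul_cancel₀ _ hB.ne']
        ring

/-- Right-hand side minus left-hand side of the logarithmic Sobolev inequality for the dilated
polynomial `z ↦ g (√s z)`, with `|g|²` regularised to `|g|² + ε`. -/
noncomputable def logSobolevDeficit (α ε : ℝ) (g : ℂ[X]) (s : ℝ) : ℝ :=
  1 / α * (s * bergmanNormSq (α + 1) (derivative g) s) +
    (bergmanNormSq α g s + ε) * Real.log (bergmanNormSq α g s + ε) -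
    ∫ z, (‖g.eval (√s * z)‖ ^ 2 + ε) * Real.log (‖g.eval (√s * z)‖ ^ 2 + ε) ∂bergmanMeasure α

section LogSobolevPolynomial

variable {α ε : ℝ}

lemma continuous_bergmanNormSq (α : ℝ) (P : ℂ[X]) : Continuous (bergmanNormSq α P) := by
  unfold bergmanNormSq Polynomial.sum
  fun_prop

lemma continuous_logSobolevDeficit (hα : 1 < α) (g : ℂ[X]) :
    Continuous fun x : ℝ × ℝ ↦ logSobolevDeficit α x.1 g x.2 := by
  have hint := continuous_integral_bergmanMeasure hα
    (F := fun (x : ℝ × ℝ) z ↦ (‖g.eval (√x.2 * z)‖ ^ 2 + x.1) *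
      Real.log (‖g.eval (√x.2 * z)‖ ^ 2 + x.1))
    (Real.continuous_mul_log.comp
      (f := fun y : (ℝ × ℝ) × ℂ ↦ ‖g.eval (√y.1.2 * y.2)‖ ^ 2 + y.1.1) (by fun_prop))
  have hnorm := continuous_bergmanNormSq α g
  have hnorm' := continuous_bergmanNormSq (α + 1) (derivative g)
  have hlog := Real.continuous_mul_log.comp
    (f := fun x : ℝ × ℝ ↦ bergmanNormSq α g x.2 + x.1) (by fun_prop)
  exact (Continuous.add (by fun_prop) hlog).sub hint

lemma bergmanNormSq_zero_right (hα : 1 < α) (g : ℂ[X]) :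
    bergmanNormSq α g 0 = ‖g.eval 0‖ ^ 2 := by
  have := isProbabilityMeasure_bergmanMeasure hα
  simp [← integral_norm_sq_eval_sqrt_mul hα g le_rfl]

lemma logSobolevDeficit_zero_right (hα : 1 < α) (g : ℂ[X]) :
    logSobolevDeficit α ε g 0 = 0 := by
  have := isProbabilityMeasure_bergmanMeasure hα
  simp [logSobolevDeficit, bergmanNormSq_zero_right hα]

lemma hasDerivAt_integral_norm_sq_add_mul_log (hα : 1 < α) (hε : 0 < ε) (g : ℂ[X]) {s : ℝ}
    (hs : 0 < s) :
    HasDerivAt (fun s : ℝ ↦ ∫ z, (‖g.eval (√s * z)‖ ^ 2 + ε) *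
        Real.log (‖g.eval (√s * z)‖ ^ 2 + ε) ∂bergmanMeasure α)
      (1 / α * ∫ z, ‖(derivative g).eval (√s * z)‖ ^ 2 *
        (Real.log (‖g.eval (√s * z)‖ ^ 2 + ε) + 1 +
          ‖g.eval (√s * z)‖ ^ 2 * (‖g.eval (√s * z)‖ ^ 2 + ε)⁻¹) ∂bergmanMeasure (α + 1)) s := by
  have hpos (v : ℝ) (hv : v ∈ Ici 0) : v + ε ≠ 0 := (add_pos_of_nonneg_of_pos hv hε).ne'
  refine hasDerivAt_integral_comp_norm_sq hα g (φ := fun v ↦ (v + ε) * Real.log (v + ε))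
    (φ' := fun v ↦ Real.log (v + ε) + 1) (φ'' := fun v ↦ (v + ε)⁻¹) (fun v hv ↦ ?_)
    (fun v hv ↦ ?_) (ContinuousOn.inv₀ (by fun_prop) hpos) hs
  · simpa using ((Real.hasDerivAt_mul_log (hpos v hv)).comp_add_const v ε).hasDerivWithinAt
  · simpa using ((Real.hasDerivAt_log (hpos v hv)).comp_add_const v ε).add_const 1
      |>.hasDerivWithinAt

lemma integral_norm_sq_derivative_mul_log_le (hα : 1 < α) (hε : 0 < ε) (g : ℂ[X]) {s : ℝ}
    (hs : 0 ≤ s) (hderiv : 0 ≤ logSobolevDeficit (α + 1) 0 (derivative g) s) :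
    ∫ z, ‖(derivative g).eval (√s * z)‖ ^ 2 * Real.log (‖g.eval (√s * z)‖ ^ 2 + ε)
        ∂bergmanMeasure (α + 1) ≤
      1 / (α + 1) * (s * bergmanNormSq (α + 1 + 1) (derivative (derivative g)) s) +
        bergmanNormSq (α + 1) (derivative g) s * Real.log (bergmanNormSq α g s + ε) := by
  have hα' : 1 < α + 1 := by linarith
  have := isProbabilityMeasure_bergmanMeasure hα'
  have hk : Continuous fun z : ℂ ↦ ‖(derivative g).eval (√s * z)‖ ^ 2 := by fun_prop
  have hψ : Continuous fun z : ℂ ↦ ‖g.eval (√s * z)‖ ^ 2 + ε := by fun_prop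
  have hgibbs := integral_mul_log_le_of_pos (μ := bergmanMeasure (α + 1)) (fun z ↦ sq_nonneg _)
    (fun z ↦ add_pos_of_nonneg_of_pos (sq_nonneg _) hε)
    (integrable_bergmanMeasure hα' hk.continuousOn) (integrable_bergmanMeasure hα' hψ.continuousOn)
    (integrable_bergmanMeasure hα' (Real.continuous_mul_log.comp hk).continuousOn)
    (integrable_bergmanMeasure hα' (hk.mul (hψ.log fun z ↦ by positivity)).continuousOn)
  rw [integral_add (integrable_bergmanMeasure hα' (by fun_prop)) (integrable_const ε),
    integral_norm_sq_eval_sqrt_mul hα' _ hs, integral_norm_sq_eval_sqrt_mul hα' _ hs,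
    integral_const, probReal_univ, one_smul] at hgibbs
  have hlog : bergmanNormSq (α + 1) (derivative g) s * Real.log (bergmanNormSq (α + 1) g s + ε) ≤
      bergmanNormSq (α + 1) (derivative g) s * Real.log (bergmanNormSq α g s + ε) := by
    have hα0 : 0 < α := by linarith
    have := bergmanNormSq_nonneg (add_pos hα0 one_pos) (derivative g) hs
    have := bergmanNormSq_nonneg (add_pos hα0 one_pos) g hs
    have := bergmanNormSq_add_one_le hα0 g hs
    gcongr
  simp only [logSobolevDeficit, add_zero] at hderiv
  linarith

lemma integral_norm_sq_derivative_mul_le (hα : 1 < α) (hε : 0 < ε) (g : ℂ[X]) {s : ℝ}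
    (hs : 0 ≤ s) :
    ∫ z, ‖(derivative g).eval (√s * z)‖ ^ 2 * (Real.log (‖g.eval (√s * z)‖ ^ 2 + ε) + 1 +
        ‖g.eval (√s * z)‖ ^ 2 * (‖g.eval (√s * z)‖ ^ 2 + ε)⁻¹) ∂bergmanMeasure α ≤
      2 * bergmanNormSq α (derivative g) s +
        ∫ z, ‖(derivative g).eval (√s * z)‖ ^ 2 * Real.log (‖g.eval (√s * z)‖ ^ 2 + ε)
          ∂bergmanMeasure α := by
  have hlog : Continuous fun z : ℂ ↦ Real.log (‖g.eval (√s * z)‖ ^ 2 + ε) :=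
    Continuous.log (by fun_prop) fun z ↦ by positivity
  have hinv : Continuous fun z : ℂ ↦ (‖g.eval (√s * z)‖ ^ 2 + ε)⁻¹ :=
    Continuous.inv₀ (by fun_prop) fun z ↦ by positivity
  rw [← integral_norm_sq_eval_sqrt_mul hα _ hs, ← integral_const_mul,
    ← integral_add (integrable_bergmanMeasure hα (by fun_prop))
      (integrable_bergmanMeasure hα (by fun_prop))]
  refine integral_mono (integrable_bergmanMeasure hα (by fun_prop))
    (integrable_bergmanMeasure hα (by fun_prop)) fun z ↦ ?_
  have hle : ‖g.eval (√s * z)‖ ^ 2 * (‖g.eval (√s * z)‖ ^ 2 + ε)⁻¹ ≤ 1 :=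
    mul_inv_le_one_of_le₀ (by linarith) (by positivity)
  simp only
  nlinarith [mul_le_mul_of_nonneg_left hle (sq_nonneg ‖(derivative g).eval (√s * z)‖)]

lemma hasDerivAt_logSobolevDeficit (hα : 1 < α) (hε : 0 < ε) (g : ℂ[X]) {s : ℝ} (hs : 0 < s) :
    HasDerivAt (logSobolevDeficit α ε g)
      (1 / α * (bergmanNormSq (α + 1) (derivative g) s * (2 + Real.log (bergmanNormSq α g s + ε)) +
        1 / (α + 1) * (s * bergmanNormSq (α + 1 + 1) (derivative (derivative g)) s) -
        ∫ z, ‖(derivative g).eval (√s * z)‖ ^ 2 * (Real.log (‖g.eval (√s * z)‖ ^ 2 + ε) + 1 +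
          ‖g.eval (√s * z)‖ ^ 2 * (‖g.eval (√s * z)‖ ^ 2 + ε)⁻¹) ∂bergmanMeasure (α + 1))) s := by
  have hα0 : 0 < α := by linarith
  have hnorm := hasDerivAt_bergmanNormSq hα0 g s
  have hnorm' := hasDerivAt_bergmanNormSq (add_pos hα0 one_pos) (derivative g) s
  have hne : bergmanNormSq α g s + ε ≠ 0 :=
    (add_pos_of_nonneg_of_pos (bergmanNormSq_nonneg hα0 g hs.le) hε).ne'
  have hentropy := (Real.hasDerivAt_mul_log hne).comp s (hnorm.add_const ε)
  refine ((((hasDerivAt_id s).mul hnorm').const_mul (1 / α)).add hentropy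
    |>.sub (hasDerivAt_integral_norm_sq_add_mul_log hα hε g hs)).congr_deriv ?_
  simp only [id]
  ring

lemma logSobolevDeficit_nonneg_of_derivative (hα : 1 < α) (hε : 0 < ε) (g : ℂ[X])
    (hderiv : ∀ s ≥ 0, 0 ≤ logSobolevDeficit (α + 1) 0 (derivative g) s) {s : ℝ} (hs : 0 ≤ s) :
    0 ≤ logSobolevDeficit α ε g s := by
  have hcont : ContinuousOn (logSobolevDeficit α ε g) (Ici 0) :=
    ((continuous_logSobolevDeficit hα g).comp (by fun_prop : Continuous (ε, ·))).continuousOn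
  have hmono : MonotoneOn (logSobolevDeficit α ε g) (Ici 0) := by
    refine monotoneOn_of_hasDerivWithinAt_nonneg (convex_Ici 0) hcont
      (fun t ht ↦ (hasDerivAt_logSobolevDeficit hα hε g ?_).hasDerivWithinAt) fun t ht ↦ ?_
    · simpa using ht
    have ht : 0 ≤ t := interior_subset ht
    have hentropy := integral_norm_sq_derivative_mul_log_le hα hε g ht (hderiv t ht)
    have hle := integral_norm_sq_derivative_mul_le (show 1 < α + 1 by linarith) hε g ht
    exact mul_nonneg (by positivity) (by linarith)
  simpa [logSobolevDeficit_zero_right hα] using hmono self_mem_Ici (mem_Ici.2 hs) hs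

lemma logSobolevDeficit_nonneg (hα : 1 < α) (g : ℂ[X]) {s : ℝ} (hs : 0 ≤ s) :
    0 ≤ logSobolevDeficit α 0 g s := by
  induction hn : g.natDegree using Nat.strong_induction_on generalizing α g s with
  | _ n ih =>
    rcases eq_or_ne g.natDegree 0 with hconst | hdeg
    · have := isProbabilityMeasure_bergmanMeasure hα
      obtain ⟨c, rfl⟩ := natDegree_eq_zero.1 hconst
      simp [logSobolevDeficit, bergmanNormSq, bergmanMoment_zero (by linarith : 0 < α)]
    have hα' : 1 < α + 1 := by linarith
    have hderiv (t : ℝ) (ht : 0 ≤ t) : 0 ≤ logSobolevDeficit (α + 1) 0 (derivative g) t :=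
      ih _ (hn ▸ natDegree_derivative_lt hdeg) hα' _ ht rfl
    have hlim : Tendsto (logSobolevDeficit α · g s) (𝓝[>] 0) (𝓝 (logSobolevDeficit α 0 g s)) :=
      ((continuous_logSobolevDeficit hα g).comp (by fun_prop : Continuous (·, s))).tendsto' 0 _ rfl
        |>.mono_left nhdsWithin_le_nhds
    refine ge_of_tendsto hlim (eventually_mem_nhdsWithin.mono fun ε hε ↦ ?_)
    exact logSobolevDeficit_nonneg_of_derivative hα hε g hderiv hs

theorem integral_norm_sq_eval_mul_log_le (hα : 1 < α) (g : ℂ[X]) :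
    ∫ z, ‖g.eval z‖ ^ 2 * Real.log (‖g.eval z‖ ^ 2) ∂bergmanMeasure α ≤
      ∫ z, (z * (derivative g).eval z * conj (g.eval z)).re ∂bergmanMeasure α +
        (∫ z, ‖g.eval z‖ ^ 2 ∂bergmanMeasure α) *
          Real.log (∫ z, ‖g.eval z‖ ^ 2 ∂bergmanMeasure α) := by
  have hdeficit := logSobolevDeficit_nonneg hα g zero_le_one
  simp only [logSobolevDeficit, add_zero, one_mul, Real.sqrt_one, Complex.ofReal_one] at hdeficit
  rw [integral_re_mul_derivative_mul_conj hα, integral_norm_sq_eval hα]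
  linarith

end LogSobolevPolynomial

/-! ### Logarithmic Sobolev inequality for holomorphic functions -/

lemma exists_polynomial_tendstoLocallyUniformlyOn {h : ℂ → ℂ} {R : ℝ} (hR : 0 < R)
    (hh : DiffContOnCl ℂ h (ball 0 R)) :
    ∃ g : ℕ → ℂ[X], TendstoLocallyUniformlyOn (fun n z ↦ (g n).eval z) h atTop (ball 0 R) := by
  lift R to NNReal using hR.le
  have hseries := (hh.hasFPowerSeriesOnBall (by exact_mod_cast hR)).tendstoLocallyUniformlyOn'
  rw [eball_coe] at hseries
  refine ⟨fun n ↦ ∑ k ∈ Finset.range n, X ^ k * C ((cauchyPowerSeries h 0 R).coeff k),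
    hseries.congr fun n z _ ↦ ?_⟩
  simp only [FormalMultilinearSeries.partialSum, sub_zero, eval_finsetSum, eval_mul, eval_C,
    eval_X_pow, FormalMultilinearSeries.apply_eq_pow_smul_coeff, smul_eq_mul]

section LogSobolevHolomorphic

variable {α : ℝ}

lemma tendsto_integral_comp_bergmanMeasure (hα : 1 < α) {V E : Type*} [NormedAddCommGroup V]
    [ProperSpace V] [NormedAddCommGroup E] [NormedSpace ℝ E] {F : ℕ → ℂ → V} {f : ℂ → V}
    {Φ : ℂ × V → E} (hΦ : Continuous Φ) (hF : ∀ n, ContinuousOn (F n) (closedBall 0 1))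
    (hlim : TendstoUniformlyOn F f atTop (closedBall 0 1)) :
    Tendsto (fun n ↦ ∫ z, Φ (z, F n z) ∂bergmanMeasure α) atTop
      (𝓝 (∫ z, Φ (z, f z) ∂bergmanMeasure α)) := by
  obtain ⟨C, hC⟩ := (isCompact_closedBall (0 : ℂ) 1).exists_bound_of_continuousOn
    (hlim.continuousOn (Frequently.of_forall hF))
  obtain ⟨D, hD⟩ := ((isCompact_closedBall (0 : ℂ) 1).prod
    (isCompact_closedBall (0 : V) (C + 1))).exists_bound_of_continuousOn hΦ.continuousOn
  refine tendsto_integral_bergmanMeasure_of_bounded hα (C := D) (.of_forall fun n ↦ ?_) ?_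
    fun z hz ↦ ?_
  · exact hΦ.comp_continuousOn (continuousOn_id.prodMk ((hF n).mono ball_subset_closedBall))
  · filter_upwards [tendstoUniformlyOn_iff.1 hlim 1 one_pos] with n hn z hz
    have hz := ball_subset_closedBall hz
    have hdist := hn z hz
    rw [dist_comm, dist_eq_norm] at hdist
    refine hD (z, F n z) ⟨hz, mem_closedBall_zero_iff.2 ?_⟩
    linarith [norm_le_norm_add_norm_sub (f z) (F n z), hC z hz,
      norm_sub_rev (f z) (F n z)]
  · exact (hΦ.tendsto _).comp
      (tendsto_const_nhds.prodMk_nhds (hlim.tendsto_at (ball_subset_closedBall hz)))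

theorem integral_norm_sq_mul_log_le (hα : 1 < α) {h : ℂ → ℂ} {R : ℝ} (hR : 1 < R)
    (hh : DifferentiableOn ℂ h (ball 0 R)) :
    ∫ z, ‖h z‖ ^ 2 * Real.log (‖h z‖ ^ 2) ∂bergmanMeasure α ≤
      ∫ z, (z * deriv h z * conj (h z)).re ∂bergmanMeasure α +
        (∫ z, ‖h z‖ ^ 2 ∂bergmanMeasure α) * Real.log (∫ z, ‖h z‖ ^ 2 ∂bergmanMeasure α) := by
  obtain ⟨r, hr, hrR⟩ := exists_between hR
  obtain ⟨g, hg⟩ := exists_polynomial_tendstoLocallyUniformlyOn (zero_lt_one.trans hr)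
    (hh.diffContOnCl_ball (closedBall_subset_ball hrR))
  have hg' := hg.deriv (.of_forall fun n ↦ (g n).differentiable.differentiableOn) isOpen_ball
  have huniform {F : ℕ → ℂ → ℂ} {f : ℂ → ℂ}
      (hF : TendstoLocallyUniformlyOn F f atTop (ball 0 r)) :
      TendstoUniformlyOn F f atTop (closedBall 0 1) :=
    (tendstoLocallyUniformlyOn_iff_forall_isCompact isOpen_ball).1 hF _
      (closedBall_subset_ball hr) (isCompact_closedBall 0 1)
  have hpair : TendstoUniformlyOn (fun n z ↦ ((g n).eval z, (derivative (g n)).eval z))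
      (fun z ↦ (h z, deriv h z)) atTop (closedBall 0 1) := fun u hu ↦ by
    simpa using tendsto_diag.eventually ((huniform hg).prodMk (huniform hg') u hu)
  have hlim {Φ : ℂ × ℂ × ℂ → ℝ} (hΦ : Continuous Φ) :=
    tendsto_integral_comp_bergmanMeasure hα hΦ (fun n ↦ by fun_prop) hpair
  have hsq : Continuous fun x : ℂ × ℂ × ℂ ↦ ‖x.2.1‖ ^ 2 := by fun_prop
  have hre : Continuous fun x : ℂ × ℂ × ℂ ↦ (x.1 * x.2.2 * conj x.2.1).re := by fun_prop
  exact le_of_tendsto_of_tendsto' (hlim (Real.continuous_mul_log.comp hsq))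
    ((hlim hre).add ((Real.continuous_mul_log.tendsto _).comp (hlim hsq)))
    fun n ↦ integral_norm_sq_eval_mul_log_le hα (g n)

lemma integral_exp_mul_log_le (hα : 1 < α) {l : ℂ → ℂ} {R : ℝ} (hR : 1 < R)
    (hl : DifferentiableOn ℂ l (ball 0 R)) :
    ∫ z, Real.exp (2 * (l z).re) * (2 * (l z).re) ∂bergmanMeasure α ≤
      ∫ z, Real.exp (2 * (l z).re) * (z * deriv l z).re ∂bergmanMeasure α +
        (∫ z, Real.exp (2 * (l z).re) ∂bergmanMeasure α) *
          Real.log (∫ z, Real.exp (2 * (l z).re) ∂bergmanMeasure α) := by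
  have hnorm (z : ℂ) : ‖Complex.exp (l z)‖ ^ 2 = Real.exp (2 * (l z).re) := by
    rw [Complex.norm_exp, ← Real.exp_nat_mul, Nat.cast_ofNat]
  have hderiv : ∫ z, (z * deriv (fun z ↦ Complex.exp (l z)) z * conj (Complex.exp (l z))).re
      ∂bergmanMeasure α =
        ∫ z, Real.exp (2 * (l z).re) * (z * deriv l z).re ∂bergmanMeasure α := by
    refine integral_congr_ae ?_
    filter_upwards [ae_mem_ball_bergmanMeasure α] with z hz
    have hlz := hl.differentiableAt (isOpen_ball.mem_nhds (ball_subset_ball hR.le hz))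
    rw [← hnorm, ← Complex.re_ofReal_mul, hlz.hasDerivAt.cexp.deriv, Complex.ofReal_pow,
      ← Complex.mul_conj']
    ring_nf
  simpa only [hnorm, hderiv, Real.log_exp] using integral_norm_sq_mul_log_le hα hR hl.cexp

end LogSobolevHolomorphic

/-! ### The flow `x ↦ ∫ |exp l(√(p / x) z)|ˣ dA_α` -/

lemma hasDerivAt_integral_bergmanMeasure {α : ℝ} (hα : 1 < α) {E : Type*} [NormedAddCommGroup E]
    [NormedSpace ℝ E] {F F' : ℝ → ℂ → E} {U : Set ℝ} {x : ℝ} (hU : U ∈ 𝓝 x)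
    (hF : ∀ y ∈ U, ContinuousOn (F y) (closedBall 0 1))
    (hF' : ContinuousOn F'.uncurry (U ×ˢ closedBall 0 1))
    (hderiv : ∀ y ∈ U, ∀ z ∈ ball (0 : ℂ) 1, HasDerivAt (F · z) (F' y z) y) :
    HasDerivAt (fun y ↦ ∫ z, F y z ∂bergmanMeasure α) (∫ z, F' x z ∂bergmanMeasure α) x := by
  have := isProbabilityMeasure_bergmanMeasure hα
  have hx := mem_of_mem_nhds hU
  obtain ⟨K, hK, hKU, hKc⟩ := local_compact_nhds hU
  obtain ⟨B, hB⟩ := (hKc.prod (isCompact_closedBall (0 : ℂ) 1)).exists_bound_of_continuousOn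
    (hF'.mono (prod_mono_left hKU))
  have hF'x : ContinuousOn (F' x) (closedBall 0 1) :=
    hF'.comp (f := (x, ·)) (by fun_prop) fun z hz ↦ ⟨hx, hz⟩
  refine (hasDerivAt_integral_of_dominated_loc_of_deriv_le hK (bound := fun _ ↦ B) ?_
    (integrable_bergmanMeasure hα (hF x hx))
    (integrable_bergmanMeasure hα hF'x).aestronglyMeasurable ?_ (integrable_const B) ?_).2
  · filter_upwards [hU] with y hy
    exact (integrable_bergmanMeasure hα (hF y hy)).aestronglyMeasurable
  · filter_upwards [ae_mem_ball_bergmanMeasure α] with z hz y hy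
      using hB (y, z) ⟨hy, ball_subset_closedBall hz⟩
  · filter_upwards [ae_mem_ball_bergmanMeasure α] with z hz y hy using hderiv y (hKU hy) z hz

lemma antitoneOn_log_div_of_mul_deriv_le {Z Z' : ℝ → ℝ} {a b : ℝ} (ha : 0 < a)
    (hZ : ContinuousOn Z (Icc a b)) (hpos : ∀ x ∈ Icc a b, 0 < Z x)
    (hZ' : ∀ x ∈ Ioo a b, HasDerivAt Z (Z' x) x)
    (hle : ∀ x ∈ Ioo a b, x * Z' x ≤ Z x * Real.log (Z x)) :
    AntitoneOn (fun x ↦ Real.log (Z x) / x) (Icc a b) := by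
  refine antitoneOn_of_hasDerivWithinAt_nonpos (convex_Icc a b)
    (f' := fun x ↦ (Z' x / Z x * x - Real.log (Z x) * 1) / x ^ 2) ?_ (fun x hx ↦ ?_) fun x hx ↦ ?_
  · exact (hZ.log fun x hx ↦ (hpos x hx).ne').div continuousOn_id
      fun x hx ↦ (ha.trans_le hx.1).ne'
  all_goals
    have hZx : 0 < Z x := hpos x (interior_subset hx)
    rw [interior_Icc] at hx
  · exact ((hZ' x hx).log hZx.ne'
      |>.div (hasDerivAt_id x) (ha.trans hx.1).ne').hasDerivWithinAt
  · refine div_nonpos_of_nonpos_of_nonneg (sub_nonpos.2 ?_) (sq_nonneg _)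
    rw [mul_one, div_mul_eq_mul_div, div_le_iff₀ hZx]
    linarith [hle x hx]

/-- The density `|exp l(√(p / x) z)|ˣ` along the flow which starts at exponent `x = p` and dilates
the disk while the exponent `x` grows. -/
noncomputable def flowDensity (p : ℝ) (l : ℂ → ℂ) (x : ℝ) (z : ℂ) : ℝ :=
  Real.exp (x * (l (√(p / x) * z)).re)

/-- The derivative of `flowDensity p l x z` in `x`. -/
noncomputable def flowDensityDeriv (p : ℝ) (l : ℂ → ℂ) (x : ℝ) (z : ℂ) : ℝ :=
  flowDensity p l x z *
    ((l (√(p / x) * z)).re - 1 / 2 * (√(p / x) * z * deriv l (√(p / x) * z)).re)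

section Flow

variable {α p x : ℝ} {l : ℂ → ℂ}

lemma hasDerivAt_sqrt_div (hp : 0 < p) (hx : 0 < x) :
    HasDerivAt (fun x ↦ √(p / x)) (-(1 / 2) * √(p / x) / x) x := by
  have hsqrt := ((hasDerivAt_inv hx.ne').const_mul p).sqrt (by positivity)
  simp only [← div_eq_mul_inv] at hsqrt
  refine hsqrt.congr_deriv ?_
  have hne : √(p / x) ≠ 0 := by positivity
  have hsq : √(p / x) ^ 2 = p / x := Real.sq_sqrt (by positivity)
  field_simp
  rw [hsq]
  field_simp

lemma sqrt_div_lt_one (hp : 0 < p) (hpx : p < x) : √(p / x) < 1 := by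
  rw [Real.sqrt_lt' one_pos, one_pow]
  exact (div_lt_one (hp.trans hpx)).2 hpx

lemma hasDerivAt_flowDensity (hp : 0 < p) (hx : 0 < x) {z : ℂ}
    (hl : DifferentiableAt ℂ l (√(p / x) * z)) :
    HasDerivAt (flowDensity p l · z) (flowDensityDeriv p l x z) x := by
  have hpoint : HasDerivAt (fun x : ℝ ↦ (√(p / x) : ℂ) * z)
      ((-(1 / 2) * √(p / x) / x : ℝ) * z) x :=
    (hasDerivAt_sqrt_div hp hx).ofReal_comp.mul_const z
  have hre := Complex.reCLM.hasFDerivAt.comp_hasDerivAt x (hl.hasDerivAt.comp x hpoint)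
  refine ((hasDerivAt_id x).mul hre).exp.congr_deriv ?_
  have hfactor : deriv l (√(p / x) * z) * ((-(1 / 2) * √(p / x) / x : ℝ) * z) =
      (-(1 / 2) / x : ℝ) * (√(p / x) * z * deriv l (√(p / x) * z)) := by
    push_cast
    ring
  simp only [id, Pi.mul_apply, Function.comp_apply, Complex.reCLM_apply, hfactor,
    Complex.re_ofReal_mul, flowDensityDeriv, flowDensity]
  field_simp
  ring

lemma continuousOn_sqrt_div_mul (hp : 0 < p) :
    ContinuousOn (fun y : ℝ × ℂ ↦ (√(p / y.1) : ℂ) * y.2) (Ici p ×ˢ closedBall 0 1) := by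
  have hdiv : ContinuousOn (fun y : ℝ × ℂ ↦ p / y.1) (Ici p ×ˢ closedBall 0 1) :=
    continuousOn_const.div continuousOn_fst fun y hy ↦ (hp.trans_le hy.1).ne'
  exact (Complex.continuous_ofReal.comp_continuousOn hdiv.sqrt).mul continuousOn_snd

lemma continuousOn_flowDensity (hp : 0 < p) (hl : ContinuousOn l (closedBall 0 1)) :
    ContinuousOn (flowDensity p l).uncurry (Ici p ×ˢ closedBall 0 1) := by
  have hmaps : MapsTo (fun y : ℝ × ℂ ↦ (√(p / y.1) : ℂ) * y.2) (Ici p ×ˢ closedBall 0 1)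
      (closedBall 0 1) := fun y hy ↦
    closedBall_subset_closedBall (Real.sqrt_le_one.2 (div_le_one_of_le₀ hy.1 (hp.le.trans hy.1)))
      (ofReal_mul_mem_closedBall (Real.sqrt_nonneg _) hy.2)
  have hcomp := Complex.continuous_re.comp_continuousOn
    (hl.comp (continuousOn_sqrt_div_mul hp) hmaps)
  exact (continuousOn_fst.mul hcomp).rexp

lemma continuousOn_flowDensityDeriv (hp : 0 < p) (hl : DifferentiableOn ℂ l (ball 0 1)) :
    ContinuousOn (flowDensityDeriv p l).uncurry (Ioi p ×ˢ closedBall 0 1) := by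
  have hmaps : MapsTo (fun y : ℝ × ℂ ↦ (√(p / y.1) : ℂ) * y.2) (Ioi p ×ˢ closedBall 0 1)
      (ball 0 1) := fun y hy ↦
    closedBall_subset_ball (sqrt_div_lt_one hp hy.1)
      (ofReal_mul_mem_closedBall (Real.sqrt_nonneg _) hy.2)
  have hpoint := (continuousOn_sqrt_div_mul hp).mono (prod_mono_left Ioi_subset_Ici_self)
  have hcomp := Complex.continuous_re.comp_continuousOn (hl.continuousOn.comp hpoint hmaps)
  have hderiv := Complex.continuous_re.comp_continuousOn
    (hpoint.mul ((hl.deriv isOpen_ball).continuousOn.comp hpoint hmaps))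
  exact (continuousOn_fst.mul hcomp).rexp.mul (hcomp.sub (hderiv.const_mul _))

lemma hasDerivAt_integral_flowDensity (hα : 1 < α) (hp : 0 < p) (hpx : p < x)
    (hl : DiffContOnCl ℂ l (ball 0 1)) :
    HasDerivAt (fun x ↦ ∫ z, flowDensity p l x z ∂bergmanMeasure α)
      (∫ z, flowDensityDeriv p l x z ∂bergmanMeasure α) x := by
  refine hasDerivAt_integral_bergmanMeasure hα (Ioi_mem_nhds hpx) (fun y hy ↦ ?_)
    (continuousOn_flowDensityDeriv hp hl.differentiableOn) fun y hy z hz ↦ ?_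
  · exact (continuousOn_flowDensity hp hl.continuousOn_ball).comp (f := (y, ·)) (by fun_prop)
      fun z hz ↦ ⟨mem_Ici.2 hy.le, hz⟩
  · exact hasDerivAt_flowDensity hp (hp.trans hy) <| hl.differentiableAt isOpen_ball <|
      closedBall_subset_ball (sqrt_div_lt_one hp hy)
        (ofReal_mul_mem_closedBall (Real.sqrt_nonneg _) (ball_subset_closedBall hz))

lemma integral_flowDensity_mul_le (hα : 1 < α) (hp : 0 < p) (hpx : p < x)
    (hl : DifferentiableOn ℂ l (ball 0 1)) :
    ∫ z, flowDensity p l x z * (x * (l (√(p / x) * z)).re) ∂bergmanMeasure α ≤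
      ∫ z, flowDensity p l x z * (x / 2 * (√(p / x) * z * deriv l (√(p / x) * z)).re)
          ∂bergmanMeasure α +
        (∫ z, flowDensity p l x z ∂bergmanMeasure α) *
          Real.log (∫ z, flowDensity p l x z ∂bergmanMeasure α) := by
  set r := √(p / x)
  have hr0 : 0 < r := Real.sqrt_pos.2 (div_pos hp (hp.trans hpx))
  have hmaps : MapsTo (fun z : ℂ ↦ r * z) (ball 0 r⁻¹) (ball 0 1) := fun z hz ↦ by
    rw [mem_ball_zero_iff, norm_mul, Complex.norm_real, Real.norm_of_nonneg hr0.le]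
    exact (lt_inv_mul_iff₀ hr0).1 (by simpa using hz)
  have hre (z : ℂ) : 2 * ((x / 2 : ℝ) * l (r * z)).re = x * (l (r * z)).re := by
    rw [Complex.re_ofReal_mul]
    ring
  have hderiv (z : ℂ) : (z * deriv (fun z ↦ (x / 2 : ℝ) * l (r * z)) z).re =
      x / 2 * (r * z * deriv l (r * z)).re := by
    rw [deriv_const_mul_field, deriv_comp_mul_left, ← Complex.re_ofReal_mul, smul_eq_mul]
    ring_nf
  have hlogSobolev := integral_exp_mul_log_le hα
    ((one_lt_inv₀ hr0).2 (sqrt_div_lt_one hp hpx))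
    ((hl.comp (by fun_prop) hmaps).const_mul ((x / 2 : ℝ) : ℂ))
  simpa only [Function.comp_apply, hre, hderiv, flowDensity] using hlogSobolev

lemma mul_integral_flowDensityDeriv_le (hα : 1 < α) (hp : 0 < p) (hpx : p < x)
    (hl : DifferentiableOn ℂ l (ball 0 1)) :
    x * ∫ z, flowDensityDeriv p l x z ∂bergmanMeasure α ≤
      (∫ z, flowDensity p l x z ∂bergmanMeasure α) *
        Real.log (∫ z, flowDensity p l x z ∂bergmanMeasure α) := by
  have hmaps (z : ℂ) (hz : z ∈ closedBall 0 1) : (√(p / x) : ℂ) * z ∈ ball 0 1 :=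
    closedBall_subset_ball (sqrt_div_lt_one hp hpx)
      (ofReal_mul_mem_closedBall (Real.sqrt_nonneg _) hz)
  have hre : ContinuousOn (fun z ↦ (l (√(p / x) * z)).re) (closedBall 0 1) :=
    Complex.continuous_re.comp_continuousOn (hl.continuousOn.comp (by fun_prop) hmaps)
  have hre' : ContinuousOn (fun z ↦ (√(p / x) * z * deriv l (√(p / x) * z)).re)
      (closedBall 0 1) :=
    Complex.continuous_re.comp_continuousOn <| ContinuousOn.mul (by fun_prop) <|
      (hl.deriv isOpen_ball).continuousOn.comp (by fun_prop) hmaps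
  have hsplit : x * ∫ z, flowDensityDeriv p l x z ∂bergmanMeasure α =
      ∫ z, flowDensity p l x z * (x * (l (√(p / x) * z)).re) ∂bergmanMeasure α -
        ∫ z, flowDensity p l x z * (x / 2 * (√(p / x) * z * deriv l (√(p / x) * z)).re)
          ∂bergmanMeasure α := by
    rw [← integral_const_mul, ← integral_sub
      (integrable_bergmanMeasure hα (by unfold flowDensity; fun_prop))
      (integrable_bergmanMeasure hα (by unfold flowDensity; fun_prop))]
    congr 1 with z
    rw [flowDensityDeriv]
    ring
  linarith [integral_flowDensity_mul_le hα hp hpx hl]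

lemma integral_flowDensity_pos (hα : 1 < α) (hp : 0 < p) (hpx : p ≤ x)
    (hl : ContinuousOn l (closedBall 0 1)) : 0 < ∫ z, flowDensity p l x z ∂bergmanMeasure α := by
  have := isProbabilityMeasure_bergmanMeasure hα
  exact integral_exp_pos <| integrable_bergmanMeasure hα <|
    (continuousOn_flowDensity hp hl).comp (f := (x, ·)) (by fun_prop) fun z hz ↦ ⟨hpx, hz⟩

lemma antitoneOn_log_integral_flowDensity_div (hα : 1 < α) (hp : 0 < p) (q : ℝ)
    (hl : DiffContOnCl ℂ l (ball 0 1)) :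
    AntitoneOn (fun x ↦ Real.log (∫ z, flowDensity p l x z ∂bergmanMeasure α) / x) (Icc p q) :=
  antitoneOn_log_div_of_mul_deriv_le hp
    (continuousOn_integral_bergmanMeasure hα isCompact_Icc <|
      (continuousOn_flowDensity hp hl.continuousOn_ball).mono (prod_mono_left Icc_subset_Ici_self))
    (fun _ hx ↦ integral_flowDensity_pos hα hp hx.1 hl.continuousOn_ball)
    (fun _ hx ↦ hasDerivAt_integral_flowDensity hα hp hx.1 hl)
    fun _ hx ↦ mul_integral_flowDensityDeriv_le hα hp hx.1 hl.differentiableOn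

theorem rpow_integral_exp_le_of_diffContOnCl (hα : 1 < α) (hp : 0 < p) {q : ℝ} (hpq : p ≤ q)
    (hl : DiffContOnCl ℂ l (ball 0 1)) :
    (∫ z, Real.exp (q * (l (√(p / q) * z)).re) ∂bergmanMeasure α) ^ (1 / q) ≤
      (∫ z, Real.exp (p * (l z).re) ∂bergmanMeasure α) ^ (1 / p) := by
  have hlog := antitoneOn_log_integral_flowDensity_div hα hp q hl (left_mem_Icc.2 hpq)
    (right_mem_Icc.2 hpq) hpq
  have hstart : ∫ z, Real.exp (p * (l z).re) ∂bergmanMeasure α =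
      ∫ z, flowDensity p l p z ∂bergmanMeasure α := by
    simp [flowDensity, div_self hp.ne']
  change (∫ z, flowDensity p l q z ∂bergmanMeasure α) ^ (1 / q) ≤ _
  rw [hstart, Real.rpow_def_of_pos (integral_flowDensity_pos hα hp hpq hl.continuousOn_ball),
    Real.rpow_def_of_pos (integral_flowDensity_pos hα hp le_rfl hl.continuousOn_ball),
    mul_one_div, mul_one_div]
  exact Real.exp_le_exp.2 hlog

end Flow

/-! ### Dilations contract rotation-invariant means of holomorphic functions -/

/-- The harmonic measure of the unit disk seen from its point `w`, as the measure on the angles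
`θ ∈ (0, 2π]` whose density is the normalised Poisson kernel. -/
noncomputable def diskHarmonicMeasure (w : ℂ) : Measure ℝ :=
  (volume.restrict (Ioc 0 (2 * Real.pi))).withDensity fun θ ↦
    ENNReal.ofReal ((2 * Real.pi)⁻¹ * poissonKernel 0 w (Circle.exp θ))

section HarmonicMeasure

variable {E : Type*} [NormedAddCommGroup E] [NormedSpace ℂ E] [CompleteSpace E]
  {w : ℂ} {G : ℂ → E}

lemma poissonKernel_circle_nonneg (hw : w ∈ ball 0 1) (c : Circle) : 0 ≤ poissonKernel 0 w c := by
  have hw : ‖w‖ ^ 2 ≤ 1 := pow_le_one₀ (norm_nonneg w) (mem_ball_zero_iff.1 hw).le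
  rw [poissonKernel_def]
  exact div_nonneg (by simpa [Circle.norm_coe] using hw) (sq_nonneg _)

lemma integral_diskHarmonicMeasure (hw : w ∈ ball 0 1) (hG : DiffContOnCl ℂ G (ball 0 1)) :
    ∫ θ, G (Circle.exp θ) ∂diskHarmonicMeasure w = G w := by
  have hmeas : Measurable fun θ : ℝ ↦
      ENNReal.ofReal ((2 * Real.pi)⁻¹ * poissonKernel 0 w (Circle.exp θ)) := by
    simp only [poissonKernel, Circle.coe_exp]
    fun_prop
  rw [diskHarmonicMeasure, integral_withDensity_eq_integral_toReal_smul hmeas (by simp),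
    ← hG.circleAverage_poissonKernel_smul hw, Real.circleAverage_def,
    intervalIntegral.integral_of_le Real.two_pi_pos.le, ← integral_smul]
  congr 1 with θ
  rw [ENNReal.toReal_ofReal (mul_nonneg (by positivity) (poissonKernel_circle_nonneg hw _)),
    mul_smul]
  simp [circleMap]

lemma isProbabilityMeasure_diskHarmonicMeasure (hw : w ∈ ball 0 1) :
    IsProbabilityMeasure (diskHarmonicMeasure w) := by
  have hmass := integral_diskHarmonicMeasure hw (G := fun _ ↦ (1 : ℂ)) diffContOnCl_const
  exact ⟨(ENNReal.toReal_eq_one_iff _).1 (by simpa [Measure.real] using hmass)⟩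

lemma enorm_apply_mul_le_lintegral_diskHarmonicMeasure (hw : w ∈ ball 0 1)
    (hG : DifferentiableOn ℂ G (ball 0 1)) {z : ℂ} (hz : z ∈ ball 0 1) :
    ‖G (w * z)‖ₑ ≤ ∫⁻ θ, ‖G (Circle.exp θ • z)‖ₑ ∂diskHarmonicMeasure w := by
  have hmaps : MapsTo (· * z) (closedBall 0 1) (ball 0 1) := fun ζ hζ ↦ by
    rw [mem_ball_zero_iff] at hz ⊢
    rw [mem_closedBall_zero_iff] at hζ
    exact (norm_mul_le ζ z).trans_lt (mul_lt_one_of_nonneg_of_lt_one_right hζ (norm_nonneg z) hz)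
  have hdil : DiffContOnCl ℂ (fun ζ ↦ G (ζ * z)) (ball 0 1) := by
    refine DifferentiableOn.diffContOnCl ?_
    rw [closure_ball _ one_ne_zero]
    exact hG.comp (by fun_prop) hmaps
  rw [← integral_diskHarmonicMeasure hw hdil]
  exact enorm_integral_le_lintegral_enorm _

end HarmonicMeasure

lemma lintegral_lintegral_smul {Ω G X : Type*} [MeasurableSpace Ω] [MeasurableSpace X] [SMul G X]
    [MeasurableConstSMul G X] {ν : Measure Ω} [IsProbabilityMeasure ν] {μ : Measure X} [SFinite μ]
    [SMulInvariantMeasure G X μ] {g : Ω → G} (hg : Measurable fun y : X × Ω ↦ g y.2 • y.1)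
    {Φ : X → ENNReal} (hΦ : Measurable Φ) :
    ∫⁻ x, ∫⁻ ω, Φ (g ω • x) ∂ν ∂μ = ∫⁻ x, Φ x ∂μ := by
  have hmeas : AEMeasurable (Function.uncurry fun x ω ↦ Φ (g ω • x)) (μ.prod ν) :=
    (hΦ.comp hg).aemeasurable
  rw [lintegral_lintegral_swap hmeas]
  simp [(measurePreserving_smul _ μ).lintegral_comp hΦ]

section Dilation

variable {E : Type*} [NormedAddCommGroup E] [NormedSpace ℂ E] [CompleteSpace E] {μ : Measure ℂ}
  [SFinite μ] [SMulInvariantMeasure Circle ℂ μ] {w : ℂ} {G : ℂ → E}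

lemma lintegral_enorm_comp_mul_le (hμ : ∀ᵐ z ∂μ, z ∈ ball (0 : ℂ) 1) (hw : w ∈ ball 0 1)
    (hG : DifferentiableOn ℂ G (ball 0 1)) :
    ∫⁻ z, ‖G (w * z)‖ₑ ∂μ ≤ ∫⁻ z, ‖G z‖ₑ ∂μ := by
  have := isProbabilityMeasure_diskHarmonicMeasure hw
  have hmeas : Measurable ((ball (0 : ℂ) 1).indicator fun z ↦ ‖G z‖ₑ) := by
    classical
    rw [← piecewise_eq_indicator]
    exact hG.continuousOn.enorm.measurable_piecewise continuousOn_const measurableSet_ball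
  have hsmul (c : Circle) {z : ℂ} (hz : z ∈ ball 0 1) : c • z ∈ ball (0 : ℂ) 1 := by
    simpa [Circle.smul_def, Circle.norm_coe] using hz
  have hrot : Measurable fun y : ℂ × ℝ ↦ Circle.exp y.2 • y.1 := by
    simp only [Circle.smul_def, Circle.coe_exp]
    fun_prop
  calc ∫⁻ z, ‖G (w * z)‖ₑ ∂μ
      ≤ ∫⁻ z, ∫⁻ θ, (ball (0 : ℂ) 1).indicator (fun z ↦ ‖G z‖ₑ) (Circle.exp θ • z)
          ∂diskHarmonicMeasure w ∂μ := by
        refine lintegral_mono_ae ?_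
        filter_upwards [hμ] with z hz
        simp only [indicator_of_mem (hsmul _ hz)]
        exact enorm_apply_mul_le_lintegral_diskHarmonicMeasure hw hG hz
    _ = ∫⁻ z, (ball (0 : ℂ) 1).indicator (fun z ↦ ‖G z‖ₑ) z ∂μ :=
        lintegral_lintegral_smul hrot hmeas
    _ = ∫⁻ z, ‖G z‖ₑ ∂μ := by
        refine lintegral_congr_ae ?_
        filter_upwards [hμ] with z hz using indicator_of_mem hz _

lemma integral_norm_comp_mul_le (hμ : ∀ᵐ z ∂μ, z ∈ ball (0 : ℂ) 1) (hw : w ∈ ball 0 1)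
    (hG : DifferentiableOn ℂ G (ball 0 1)) (hint : Integrable (fun z ↦ ‖G z‖) μ) :
    ∫ z, ‖G (w * z)‖ ∂μ ≤ ∫ z, ‖G z‖ ∂μ := by
  by_cases hint' : Integrable (fun z ↦ ‖G (w * z)‖) μ
  · rw [integral_eq_lintegral_of_nonneg_ae (.of_forall fun _ ↦ norm_nonneg _) hint'.1,
      integral_eq_lintegral_of_nonneg_ae (.of_forall fun _ ↦ norm_nonneg _) hint.1]
    simp only [ofReal_norm]
    refine ENNReal.toReal_mono ?_ (lintegral_enorm_comp_mul_le hμ hw hG)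
    simpa [HasFiniteIntegral] using hint.2.ne
  · rw [integral_undef hint']
    positivity

end Dilation

/-! ### Zero-free functions -/

lemma exists_differentiableOn_eqOn_exp_comp {f : ℂ → ℂ} {c : ℂ} {R : ℝ}
    (hf : DifferentiableOn ℂ f (ball c R)) (hf0 : ∀ z ∈ ball c R, f z ≠ 0) :
    ∃ l : ℂ → ℂ, DifferentiableOn ℂ l (ball c R) ∧ EqOn f (Complex.exp ∘ l) (ball c R) := by
  obtain ⟨l, hlc, hl⟩ := ((hf.deriv isOpen_ball).div hf hf0).isExactOn_ball.with_val_at c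
    (Complex.log (f c))
  have hquot (z : ℂ) (hz : z ∈ ball c R) : HasDerivAt (fun z ↦ f z * Complex.exp (-l z)) 0 z := by
    have hfz := (hf.differentiableAt (isOpen_ball.mem_nhds hz)).hasDerivAt
    refine (hfz.mul (hl z hz).neg.cexp).congr_deriv ?_
    have := hf0 z hz
    simp only [Pi.div_apply]
    field_simp
    ring
  refine ⟨l, fun z hz ↦ (hl z hz).differentiableAt.differentiableWithinAt, fun z hz ↦ ?_⟩
  have hc : c ∈ ball c R := mem_ball_self (pos_of_mem_ball hz)
  have hconst : f z * Complex.exp (-l z) = f c * Complex.exp (-l c) :=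
    isOpen_ball.is_const_of_deriv_eq_zero (convex_ball c R).isPreconnected
      (fun z hz ↦ (hquot z hz).differentiableAt.differentiableWithinAt)
      (fun z hz ↦ (hquot z hz).deriv) hz hc
  rw [hlc, Complex.exp_neg, Complex.exp_neg, Complex.exp_log (hf0 c hc),
    mul_inv_cancel₀ (hf0 c hc)] at hconst
  exact eq_of_div_eq_one hconst

lemma norm_cexp_rpow (x : ℝ) (w : ℂ) : ‖Complex.exp w‖ ^ x = Real.exp (x * w.re) := by
  rw [Complex.norm_exp, ← Real.exp_mul, mul_comm]

section ZeroFree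

variable {α p q r ρ : ℝ} {l : ℂ → ℂ}

lemma integral_exp_comp_mul_le (hα : 1 < α) (hρ : ρ ∈ Ioo (0 : ℝ) 1)
    (hl : DifferentiableOn ℂ l (ball 0 1))
    (hint : Integrable (fun z ↦ Real.exp (p * (l z).re)) (bergmanMeasure α)) :
    ∫ z, Real.exp (p * (l (ρ * z)).re) ∂bergmanMeasure α ≤
      ∫ z, Real.exp (p * (l z).re) ∂bergmanMeasure α := by
  have := isProbabilityMeasure_bergmanMeasure hα
  have hnorm (w : ℂ) : ‖Complex.exp (p * w)‖ = Real.exp (p * w.re) := by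
    rw [Complex.norm_exp, Complex.re_ofReal_mul]
  have hρ' : (ρ : ℂ) ∈ ball 0 1 := by simpa [abs_of_pos hρ.1] using hρ.2
  simp only [← hnorm] at hint ⊢
  exact integral_norm_comp_mul_le (ae_mem_ball_bergmanMeasure α) hρ'
    (G := fun z ↦ Complex.exp (p * l z)) (hl.const_mul _).cexp hint

lemma rpow_integral_exp_comp_mul_le (hα : 1 < α) (hp : 0 < p) (hpq : p ≤ q)
    (hρ : ρ ∈ Ioo (0 : ℝ) 1) (hl : DifferentiableOn ℂ l (ball 0 1))
    (hint : Integrable (fun z ↦ Real.exp (p * (l z).re)) (bergmanMeasure α)) :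
    (∫ z, Real.exp (q * (l (ρ * (√(p / q) * z))).re) ∂bergmanMeasure α) ^ (1 / q) ≤
      (∫ z, Real.exp (p * (l z).re) ∂bergmanMeasure α) ^ (1 / p) := by
  have hdil : DiffContOnCl ℂ (fun z ↦ l (ρ * z)) (ball 0 1) := by
    refine DifferentiableOn.diffContOnCl ?_
    rw [closure_ball _ one_ne_zero]
    exact hl.comp (by fun_prop) fun z hz ↦
      closedBall_subset_ball hρ.2 (ofReal_mul_mem_closedBall hρ.1.le hz)
  exact (rpow_integral_exp_le_of_diffContOnCl hα hp hpq hdil).trans <|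
    Real.rpow_le_rpow (by positivity) (integral_exp_comp_mul_le hα hρ hl hint) (by positivity)

lemma tendsto_integral_exp_comp_mul (hα : 1 < α) (hr : r ∈ Ico (0 : ℝ) 1)
    (hl : ContinuousOn l (ball 0 1)) :
    Tendsto (fun ρ : ℝ ↦ ∫ z, Real.exp (q * (l (ρ * (r * z))).re) ∂bergmanMeasure α) (𝓝[<] 1)
      (𝓝 (∫ z, Real.exp (q * (l (r * z)).re) ∂bergmanMeasure α)) := by
  have hcont : ContinuousOn (fun z ↦ Real.exp (q * (l z).re)) (ball 0 1) := by fun_prop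
  have hIoo : ∀ᶠ ρ : ℝ in 𝓝[<] 1, ρ ∈ Ioo (0 : ℝ) 1 := Ioo_mem_nhdsLT zero_lt_one
  obtain ⟨C, hC⟩ := (isCompact_closedBall (0 : ℂ) r).exists_bound_of_continuousOn
    (hcont.mono (closedBall_subset_ball hr.2))
  have hmaps {ρ : ℝ} (hρ : ρ ∈ Ioo (0 : ℝ) 1) {z : ℂ} (hz : z ∈ ball 0 1) :
      (ρ : ℂ) * (r * z) ∈ closedBall 0 r := by
    rw [mul_left_comm]
    exact ofReal_mul_mem_closedBall hr.1 <| closedBall_subset_closedBall hρ.2.le <|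
      ofReal_mul_mem_closedBall hρ.1.le (ball_subset_closedBall hz)
  refine tendsto_integral_bergmanMeasure_of_bounded hα (C := C) ?_ ?_ fun z hz ↦ ?_
  · filter_upwards [hIoo] with ρ hρ
    exact hcont.comp (by fun_prop) fun z hz ↦ closedBall_subset_ball hr.2 (hmaps hρ hz)
  · filter_upwards [hIoo] with ρ hρ z hz using hC _ (hmaps hρ hz)
  · have hlim : Tendsto (fun ρ : ℝ ↦ (ρ : ℂ) * (r * z)) (𝓝[<] 1) (𝓝 (r * z)) :=
      (Continuous.tendsto' (by fun_prop) _ _ (by simp)).mono_left nhdsWithin_le_nhds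
    have hrz : (r : ℂ) * z ∈ ball 0 1 := closedBall_subset_ball hr.2
      (ofReal_mul_mem_closedBall hr.1 (ball_subset_closedBall hz))
    exact (hcont.continuousAt (isOpen_ball.mem_nhds hrz)).tendsto.comp hlim

theorem rpow_integral_exp_le (hα : 1 < α) (hp : 0 < p) (hpq : p < q)
    (hl : DifferentiableOn ℂ l (ball 0 1))
    (hint : Integrable (fun z ↦ Real.exp (p * (l z).re)) (bergmanMeasure α)) :
    (∫ z, Real.exp (q * (l (√(p / q) * z)).re) ∂bergmanMeasure α) ^ (1 / q) ≤
      (∫ z, Real.exp (p * (l z).re) ∂bergmanMeasure α) ^ (1 / p) := by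
  have hq : 0 < q := hp.trans hpq
  have hlim := tendsto_integral_exp_comp_mul (q := q) hα
    ⟨Real.sqrt_nonneg _, sqrt_div_lt_one hp hpq⟩ hl.continuousOn
  refine le_of_tendsto (hlim.rpow_const (.inr (by positivity))) ?_
  filter_upwards [Ioo_mem_nhdsLT zero_lt_one] with ρ hρ
    using rpow_integral_exp_comp_mul_le hα hp hpq.le hρ hl hint

end ZeroFree

theorem hypercontractivity_zero_free_q_lt_two_general {p q α : ℝ} (hp : 0 < p) (hpq : p ≤ q)
    (hα : 1 < α) {f : ℂ → ℂ} (hf : DifferentiableOn ℂ f (ball (0 : ℂ) 1))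
    (hf0 : ∀ z ∈ ball (0 : ℂ) 1, f z ≠ 0)
    (hfp : Integrable (fun z ↦ ‖f z‖ ^ p) (bergmanMeasure α)) :
    (∫ z, ‖f (√(p / q) * z)‖ ^ q ∂bergmanMeasure α) ^ (1 / q) ≤
      (∫ z, ‖f z‖ ^ p ∂bergmanMeasure α) ^ (1 / p) := by
  obtain rfl | hpq := hpq.eq_or_lt
  · simp [div_self hp.ne']
  obtain ⟨l, hl, hfl⟩ := exists_differentiableOn_eqOn_exp_comp hf hf0
  have hleft : (fun z ↦ ‖f (√(p / q) * z)‖ ^ q) =ᵐ[bergmanMeasure α]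
      fun z ↦ Real.exp (q * (l (√(p / q) * z)).re) := by
    filter_upwards [ae_mem_ball_bergmanMeasure α] with z hz
    rw [hfl (closedBall_subset_ball (sqrt_div_lt_one hp hpq) (ofReal_mul_mem_closedBall
      (Real.sqrt_nonneg _) (ball_subset_closedBall hz))), Function.comp_apply, norm_cexp_rpow]
  have hright : (fun z ↦ ‖f z‖ ^ p) =ᵐ[bergmanMeasure α] fun z ↦ Real.exp (p * (l z).re) := by
    filter_upwards [ae_mem_ball_bergmanMeasure α] with z hz
    rw [hfl hz, Function.comp_apply, norm_cexp_rpow]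
  rw [integral_congr_ae hleft, integral_congr_ae hright]
  exact rpow_integral_exp_le hα hp hpq hl (hfp.congr hright)

theorem hypercontractivity_zero_free_q_lt_two
    (p q α : ℝ) (hp : 0 < p) (hpq : p < q) (hq2 : q < 2) (hα : 1 < α)
    (f : ℂ → ℂ) (hf : DifferentiableOn ℂ f (ball (0 : ℂ) 1))
    (hf0 : ∀ z ∈ ball (0 : ℂ) 1, f z ≠ 0)
    (hfp : Integrable (fun z => ‖f z‖ ^ p) (bergmanMeasure α)) :
    (∫ z, ‖f ((Real.sqrt (p / q) : ℂ) * z)‖ ^ q ∂(bergmanMeasure α)) ^ (1 / q) ≤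
      (∫ z, ‖f z‖ ^ p ∂(bergmanMeasure α)) ^ (1 / p) :=
  hypercontractivity_zero_free_q_lt_two_general hp hpq.le hα hf hf0 hfp
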